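/- Let f be a positive continuous function on [0,∞) satisfying Condition A, let φ be a branching mechanism (with Lévy measure m) satisfying Grey's condition, and let (Q_t)_{t≥0} be the transition semigroup of the CB-process with branching mechanism φ. Let μ be a probability measure on [0,∞) with μ((0,∞)) > 0 (the law of the initial state X_0). Then for every t > 0, the f-moment ∫_{[0,∞)} ∫_{[0,∞)} f(y) Q_t(x,dy) μ(dx) is finite if and only if ∫_{[0,∞)} f(x) μ(dx) < ∞ and ∫_{(1,∞)} f(z) m(dz) < ∞. -/

import Mathlib

open MeasureTheory Set Filter

noncomputable section

/-- A positive continuous function on `[0,∞)` satisfying Condition A: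
there exist `c ≥ 0` and `K > 0` such that `f` is convex on `[c,∞)`,
`f (x*y) ≤ K * f x * f y` for `x, y ∈ [c,∞)`, and `f` is bounded on `[0,c)`. -/
def ConditionA (f : ℝ → ℝ) : Prop :=
  ContinuousOn f (Set.Ici 0) ∧ (∀ x, 0 ≤ x → 0 < f x) ∧
  ∃ c, 0 ≤ c ∧ ∃ K, 0 < K ∧
    ConvexOn ℝ (Set.Ici c) f ∧
    (∀ x y, c ≤ x → c ≤ y → f (x * y) ≤ K * f x * f y) ∧
    ∃ M, ∀ x, 0 ≤ x → x < c → f x ≤ M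

/-- Condition B with constant `K`: `f` is convex and nondecreasing on `[0,∞)`,
submultiplicative up to the constant `K`, and `f > 1` on `[0,∞)`. -/
def ConditionB (f : ℝ → ℝ) (K : ℝ) : Prop :=
  0 < K ∧ ConvexOn ℝ (Set.Ici 0) f ∧ MonotoneOn f (Set.Ici 0) ∧
  (∀ x y, 0 ≤ x → 0 ≤ y → f (x * y) ≤ K * f x * f y) ∧
  (∀ x, 0 ≤ x → 1 < f x)

/-- `φ` is a branching mechanism with parameters `β ∈ ℝ`, `σ ≥ 0` and Lévy
measure `m` (a σ-finite measure carried by `(0,∞)` with `∫ 1 ∧ z² m(dz) < ∞`):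
`φ(λ) = βλ + σ²λ²/2 + ∫ (e^{-zλ} - 1 + zλ 1_{z ≤ 1}) m(dz)`. -/
structure IsBranchingMechanism (φ : ℝ → ℝ) (β σ : ℝ) (m : Measure ℝ) : Prop where
  sigma_nonneg : 0 ≤ σ
  sigmaFinite : SigmaFinite m
  carrier : m (Set.Iic 0) = 0
  levy_finite : ∫⁻ z, ENNReal.ofReal (min 1 (z ^ 2)) ∂m < ⊤
  form : ∀ l, 0 ≤ l →
    φ l = β * l + σ ^ 2 * l ^ 2 / 2
      + ∫ z, (Real.exp (-(z * l)) - 1 + (if z ≤ 1 then z * l else 0)) ∂m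

/-- Grey's condition: `∫_{0+} φ(λ)⁻¹ dλ = ∞`, i.e. `φ⁻¹` fails to be
integrable on every right neighbourhood of `0`. -/
def GreyCondition (φ : ℝ → ℝ) : Prop :=
  ∀ ε, 0 < ε → ¬ IntegrableOn (fun l => (φ l)⁻¹) (Set.Ioo 0 ε) volume

/-- `v t l` is the nonnegative solution of `v_t(λ) = λ - ∫_0^t φ(v_s(λ)) ds`. -/
def IsCumulant (φ : ℝ → ℝ) (v : ℝ → ℝ → ℝ) : Prop :=
  ∀ l, 0 ≤ l → ∀ t, 0 ≤ t →
    0 ≤ v t l ∧ v t l = l - ∫ s in (0:ℝ)..t, φ (v s l)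

/-- `(Q t)_{t ≥ 0}` is the transition semigroup of the CB-process with cumulant
`v`: each `Q t x` is a probability measure on `[0,∞)` with Laplace transform
`∫ e^{-λ y} Q_t(x, dy) = e^{-x v_t(λ)}`. -/
def IsCBSemigroup (v : ℝ → ℝ → ℝ) (Q : ℝ → ℝ → Measure ℝ) : Prop :=
  ∀ t x, 0 ≤ t → 0 ≤ x →
    IsProbabilityMeasure (Q t x) ∧ Q t x (Set.Iio 0) = 0 ∧
    ∀ l, 0 ≤ l → ∫ y, Real.exp (-(l * y)) ∂(Q t x) = Real.exp (-(x * v t l))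

/-- `ψ` is an immigration mechanism with drift `h ≥ 0` and immigration measure
`ν` (a σ-finite measure carried by `(0,∞)` with `∫ 1 ∧ z ν(dz) < ∞`):
`ψ(λ) = hλ + ∫ (1 - e^{-λz}) ν(dz)`. -/
structure IsImmigrationMechanism (ψ : ℝ → ℝ) (h : ℝ) (ν : Measure ℝ) : Prop where
  h_nonneg : 0 ≤ h
  sigmaFinite : SigmaFinite ν
  carrier : ν (Set.Iic 0) = 0
  levy_finite : ∫⁻ z, ENNReal.ofReal (min 1 z) ∂ν < ⊤
  form : ∀ l, 0 ≤ l → ψ l = h * l + ∫ z, (1 - Real.exp (-(l * z))) ∂ν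

/-- `(Q^γ t)_{t ≥ 0}` is the transition semigroup of the CBI-process with
cumulant `v` and immigration mechanism `ψ`: each `Qγ t x` is a probability
measure on `[0,∞)` with Laplace transform
`∫ e^{-λ y} Q^γ_t(x, dy) = exp(-x v_t(λ) - ∫_0^t ψ(v_s(λ)) ds)`. -/
def IsCBISemigroup (v : ℝ → ℝ → ℝ) (ψ : ℝ → ℝ) (Qγ : ℝ → ℝ → Measure ℝ) : Prop :=
  ∀ t x, 0 ≤ t → 0 ≤ x →
    IsProbabilityMeasure (Qγ t x) ∧ Qγ t x (Set.Iio 0) = 0 ∧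
    ∀ l, 0 ≤ l →
      ∫ y, Real.exp (-(l * y)) ∂(Qγ t x)
        = Real.exp (-(x * v t l) - ∫ s in (0:ℝ)..t, ψ (v s l))


/-! ### Part 1: the branching mechanism -/

lemma exp_neg_sub_bound {u : ℝ} (hu : 0 ≤ u) :
    0 ≤ Real.exp (-u) - 1 + u ∧ Real.exp (-u) - 1 + u ≤ u ^ 2 := by
  constructor
  · have := Real.add_one_le_exp (-u); linarith
  · by_cases h : u ≤ 1
    · have h1 := Real.abs_exp_sub_one_sub_id_le (x := -u) (by rw [abs_neg, abs_of_nonneg hu]; exact h)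
      have := (abs_le.1 h1).2
      nlinarith
    · push Not at h
      have : Real.exp (-u) ≤ 1 := Real.exp_le_one_iff.2 (by linarith)
      nlinarith

/-- The kernel appearing in the branching mechanism. -/
def kerB (z l : ℝ) : ℝ := Real.exp (-(z * l)) - 1 + (if z ≤ 1 then z * l else 0)

lemma kerB_meas (l : ℝ) : Measurable (fun z => kerB z l) := by
  unfold kerB
  refine Measurable.add (by fun_prop) ?_
  exact Measurable.ite measurableSet_Iic (by fun_prop) measurable_const

lemma kerB_abs_le {z l : ℝ} (hz : 0 < z) (hl : 0 ≤ l) :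
    |kerB z l| ≤ (1 + l ^ 2) * min 1 (z ^ 2) := by
  unfold kerB
  have hu : 0 ≤ z * l := by positivity
  split_ifs with h
  · obtain ⟨h1, h2⟩ := exp_neg_sub_bound hu
    rw [abs_of_nonneg h1, min_eq_right (by nlinarith)]
    nlinarith [sq_nonneg z]
  · push Not at h
    rw [min_eq_left (by nlinarith), add_zero, abs_le]
    have : Real.exp (-(z * l)) ≤ 1 := Real.exp_le_one_iff.2 (by linarith)
    have := Real.exp_pos (-(z * l))
    constructor <;> nlinarith [sq_nonneg l]

lemma kerB_lower {z l : ℝ} (hz : 0 < z) (hl : 0 ≤ l) :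
    -(min 1 (z ^ 2)) ≤ kerB z l := by
  unfold kerB
  have hu : 0 ≤ z * l := by positivity
  have : 0 ≤ min 1 (z ^ 2) := by positivity
  split_ifs with h
  · obtain ⟨h1, h2⟩ := exp_neg_sub_bound hu
    linarith
  · push Not at h
    rw [min_eq_left (by nlinarith), add_zero]
    have := Real.exp_pos (-(z * l))
    linarith

lemma kerB_lower' {z l : ℝ} (hz : 0 < z) (hl : 0 ≤ l) :
    -((Ioi (1:ℝ)).indicator id z * l) ≤ kerB z l := by
  unfold kerB
  have hu : 0 ≤ z * l := by positivity
  by_cases h : z ≤ 1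
  · rw [indicator_of_notMem (by simpa using h), if_pos h]
    have := (exp_neg_sub_bound hu).1
    linarith
  · rw [indicator_of_mem (by simpa using h), if_neg h]
    have := (exp_neg_sub_bound hu).1
    simp only [id]
    linarith

lemma kerB_upper {z l : ℝ} (hz : 0 < z) (hl : 0 ≤ l) :
    kerB z l ≤ l ^ 2 * min 1 (z ^ 2) := by
  unfold kerB
  have hu : 0 ≤ z * l := by positivity
  split_ifs with h
  · obtain ⟨h1, h2⟩ := exp_neg_sub_bound hu
    rw [min_eq_right (by nlinarith)]
    nlinarith [sq_nonneg z]
  · push Not at h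
    have : Real.exp (-(z * l)) ≤ 1 := Real.exp_le_one_iff.2 (by linarith)
    have : 0 ≤ l ^ 2 * min 1 (z ^ 2) := by positivity
    linarith

lemma exp_neg_lip {a b : ℝ} (hab : a ≤ b) :
    0 ≤ Real.exp (-a) - Real.exp (-b) ∧
    Real.exp (-a) - Real.exp (-b) ≤ (b - a) * Real.exp (-a) := by
  constructor
  · have := Real.exp_le_exp.2 (neg_le_neg hab); linarith
  · have h1 : Real.exp (-b) = Real.exp (-a) * Real.exp (-(b - a)) := by
      rw [← Real.exp_add]; congr 1; ring
    have := Real.add_one_le_exp (-(b - a))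
    have := Real.exp_pos (-a)
    rw [h1]; nlinarith

lemma kerB_lip_aux {z a b δ B : ℝ} (hz : 0 < z) (hδ : 0 < δ) (ha : δ ≤ a) (hb : b ≤ B) (hab : a ≤ b) :
    |kerB z a - kerB z b| ≤ (B + δ⁻¹) * (b - a) * min 1 (z ^ 2) := by
  have hB : 0 < B := by linarith
  have hzab : z * a ≤ z * b := by gcongr
  obtain ⟨h1, h2⟩ := exp_neg_lip hzab
  have hd : 0 < δ⁻¹ := by positivity
  have e1 : Real.exp (-(z * a)) ≤ 1 := Real.exp_le_one_iff.2 (by nlinarith)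
  have hba : 0 ≤ b - a := by linarith
  unfold kerB
  split_ifs with h
  · rw [min_eq_right (by nlinarith)]
    -- lower bound on difference of exponentials
    have h3 : Real.exp (-(z * a)) - Real.exp (-(z * b)) ≥ (z * b - z * a) * Real.exp (-(z * b)) := by
      have h1 : Real.exp (-(z * a)) = Real.exp (-(z * b)) * Real.exp (z * b - z * a) := by
        rw [← Real.exp_add]; congr 1; ring
      have := Real.add_one_le_exp (z * b - z * a)
      have := Real.exp_pos (-(z * b))
      rw [h1]; nlinarith
    have h4 : 1 - Real.exp (-(z * b)) ≤ z * b := by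
      have := Real.add_one_le_exp (-(z * b)); linarith
    have h5 : (z * b - z * a) * (1 - Real.exp (-(z * b))) ≤ (z * b - z * a) * (z * B) := by
      apply mul_le_mul_of_nonneg_left _ (by linarith)
      nlinarith
    have h6 : (z * b - z * a) * Real.exp (-(z * a)) ≤ (z * b - z * a) := by
      apply mul_le_of_le_one_right (by linarith) e1
    have h7 : 0 ≤ δ⁻¹ * (b - a) * z ^ 2 := by positivity
    rw [abs_le]
    constructor <;> nlinarith
  · push Not at h
    rw [min_eq_left (by nlinarith)]
    have h8 : z * Real.exp (-(z * a)) ≤ δ⁻¹ := by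
      have h9 : z * δ ≤ Real.exp (z * a) := by
        have := Real.add_one_le_exp (z * a); nlinarith
      rw [Real.exp_neg, ← div_eq_mul_inv, div_le_iff₀ (Real.exp_pos _), inv_mul_eq_div, le_div_iff₀ hδ]
      exact h9
    have h10 : (z * b - z * a) * Real.exp (-(z * a)) ≤ δ⁻¹ * (b - a) := by
      calc _ = (b - a) * (z * Real.exp (-(z * a))) := by ring
        _ ≤ (b - a) * δ⁻¹ := by gcongr
        _ = _ := by ring
    have h11 : 0 ≤ B * (b - a) := by positivity
    rw [abs_le]
    constructor <;> nlinarith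

lemma kerB_lip {z a b δ B : ℝ} (hz : 0 < z) (hδ : 0 < δ) (ha : a ∈ Icc δ B) (hb : b ∈ Icc δ B) :
    |kerB z a - kerB z b| ≤ (B + δ⁻¹) * |a - b| * min 1 (z ^ 2) := by
  rcases le_total a b with h | h
  · rw [abs_sub_comm a b, abs_of_nonneg (sub_nonneg.2 h)]
    exact kerB_lip_aux hz hδ ha.1 hb.2 h
  · rw [abs_sub_comm, abs_of_nonneg (sub_nonneg.2 h)]
    exact kerB_lip_aux hz hδ hb.1 ha.2 h

namespace IsBranchingMechanism
variable {φ : ℝ → ℝ} {β σ : ℝ} {m : Measure ℝ}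

lemma ae_pos (hφ : IsBranchingMechanism φ β σ m) : ∀ᵐ z ∂m, 0 < z := by
  have := hφ.carrier
  rw [ae_iff]
  convert this using 2
  ext z; simp

lemma int_min (hφ : IsBranchingMechanism φ β σ m) : Integrable (fun z : ℝ => min 1 (z ^ 2)) m := by
  refine ⟨by fun_prop, ?_⟩
  rw [hasFiniteIntegral_iff_ofReal (ae_of_all _ fun z => by positivity)]
  exact hφ.levy_finite

lemma meas_Ioi (hφ : IsBranchingMechanism φ β σ m) : m (Ioi 1) < ⊤ := by
  calc m (Ioi 1) = ∫⁻ z in Ioi (1:ℝ), 1 ∂m := by simp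
    _ ≤ ∫⁻ z in Ioi (1:ℝ), ENNReal.ofReal (min 1 (z ^ 2)) ∂m := by
      apply setLIntegral_mono' measurableSet_Ioi
      intro z hz
      have hz : 1 < z := hz
      rw [min_eq_left (by nlinarith)]; simp
    _ ≤ ∫⁻ z, ENNReal.ofReal (min 1 (z ^ 2)) ∂m := setLIntegral_le_lintegral _ _
    _ < ⊤ := hφ.levy_finite

lemma form' (hφ : IsBranchingMechanism φ β σ m) {l : ℝ} (hl : 0 ≤ l) :
    φ l = β * l + σ ^ 2 * l ^ 2 / 2 + ∫ z, kerB z l ∂m := hφ.form l hl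

lemma int_ker (hφ : IsBranchingMechanism φ β σ m) {l : ℝ} (hl : 0 ≤ l) :
    Integrable (fun z => kerB z l) m := by
  refine (hφ.int_min.const_mul (1 + l ^ 2)).mono' (kerB_meas l).aestronglyMeasurable ?_
  filter_upwards [hφ.ae_pos] with z hz
  exact kerB_abs_le hz hl

lemma phi_zero (hφ : IsBranchingMechanism φ β σ m) : φ 0 = 0 := by
  rw [hφ.form' le_rfl]
  simp [kerB]

lemma phi_lip (hφ : IsBranchingMechanism φ β σ m) {δ B : ℝ} (hδ : 0 < δ) :
    ∃ L : ℝ, 0 ≤ L ∧ ∀ a ∈ Icc δ B, ∀ b ∈ Icc δ B, |φ a - φ b| ≤ L * |a - b| := by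
  by_cases hB : B < δ
  · exact ⟨0, le_rfl, fun a ha => by have := ha.1.trans ha.2; linarith⟩
  push Not at hB
  have hB0 : 0 < B := by linarith
  have hI : 0 ≤ ∫ z : ℝ, min 1 (z ^ 2) ∂m := integral_nonneg fun z => by positivity
  refine ⟨|β| + σ ^ 2 * B + (B + δ⁻¹) * ∫ z : ℝ, min 1 (z ^ 2) ∂m, by positivity, ?_⟩
  intro a ha b hb
  have ha0 : 0 ≤ a := hδ.le.trans ha.1
  have hb0 : 0 ≤ b := hδ.le.trans hb.1
  rw [hφ.form' ha0, hφ.form' hb0]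
  have h1 : |∫ z, kerB z a ∂m - ∫ z, kerB z b ∂m| ≤ (B + δ⁻¹) * |a - b| * ∫ z : ℝ, min 1 (z ^ 2) ∂m := by
    rw [← integral_sub (hφ.int_ker ha0) (hφ.int_ker hb0), ← integral_const_mul]
    refine (Real.norm_eq_abs _).ge.trans (norm_integral_le_of_norm_le (hφ.int_min.const_mul _) ?_)
    filter_upwards [hφ.ae_pos] with z hz
    exact kerB_lip hz hδ ha hb
  have h2 : |β * (a - b)| = |β| * |a - b| := abs_mul _ _
  have h3 : |σ ^ 2 * (a + b) / 2 * (a - b)| ≤ σ ^ 2 * B * |a - b| := by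
    rw [abs_mul]
    gcongr
    rw [abs_of_nonneg (by positivity)]
    nlinarith [sq_nonneg σ, ha.2, hb.2]
  calc _ = |β * (a - b) + σ ^ 2 * (a + b) / 2 * (a - b) + (∫ z, kerB z a ∂m - ∫ z, kerB z b ∂m)| := by
        congr 1; ring
    _ ≤ |β * (a - b)| + |σ ^ 2 * (a + b) / 2 * (a - b)| + |∫ z, kerB z a ∂m - ∫ z, kerB z b ∂m| :=
        (abs_add_le _ _).trans (by gcongr; exact abs_add_le _ _)
    _ ≤ _ := by rw [h2]; nlinarith

lemma phi_cont (hφ : IsBranchingMechanism φ β σ m) : ContinuousOn φ (Ici 0) := by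
  have key : ∀ B : ℝ, ContinuousOn φ (Icc 0 B) := by
    intro B
    have h1 : ContinuousOn (fun l => ∫ z, kerB z l ∂m) (Icc 0 B) := by
      apply continuousOn_of_dominated (bound := fun z => (1 + B ^ 2) * min 1 (z ^ 2))
      · intro l hl; exact (kerB_meas l).aestronglyMeasurable
      · intro l hl
        filter_upwards [hφ.ae_pos] with z hz
        refine (kerB_abs_le hz hl.1).trans ?_
        have := hl.1
        have := hl.2
        gcongr
      · exact hφ.int_min.const_mul _
      · refine ae_of_all _ fun z => ?_
        unfold kerB
        split_ifs <;> fun_prop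
    have h2 : ContinuousOn (fun l => β * l + σ ^ 2 * l ^ 2 / 2 + ∫ z, kerB z l ∂m) (Icc 0 B) := by
      fun_prop
    exact h2.congr fun l hl => hφ.form' hl.1
  intro l hl
  have hl : 0 ≤ l := hl
  have := key (l + 1) l ⟨hl, by linarith⟩
  refine this.mono_of_mem_nhdsWithin ?_
  have : Icc 0 (l + 1) = Ici 0 ∩ Iic (l + 1) := by ext; simp
  rw [this]
  exact inter_mem self_mem_nhdsWithin (mem_nhdsWithin_of_mem_nhds (Iic_mem_nhds (by linarith)))

lemma phi_lower (hφ : IsBranchingMechanism φ β σ m) :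
    ∃ A : ℝ, 0 ≤ A ∧ ∀ u, 0 ≤ u → -(A * (1 + u)) ≤ φ u := by
  have hI : 0 ≤ ∫ z : ℝ, min 1 (z ^ 2) ∂m := integral_nonneg fun z => by positivity
  refine ⟨|β| + ∫ z : ℝ, min 1 (z ^ 2) ∂m, by positivity, fun u hu => ?_⟩
  rw [hφ.form' hu]
  have h1 : -(∫ z : ℝ, min 1 (z ^ 2) ∂m) ≤ ∫ z, kerB z u ∂m := by
    rw [← integral_neg]
    apply integral_mono_ae hφ.int_min.neg (hφ.int_ker hu)
    filter_upwards [hφ.ae_pos] with z hz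
    exact kerB_lower hz hu
  have h2 : -(|β| * u) ≤ β * u := by nlinarith [neg_abs_le β]
  have h3 : 0 ≤ σ ^ 2 * u ^ 2 / 2 := by positivity
  have := abs_nonneg β
  nlinarith

lemma phi_lower' (hφ : IsBranchingMechanism φ β σ m) (h1m : IntegrableOn id (Ioi 1) m) :
    ∃ A : ℝ, 0 ≤ A ∧ ∀ u, 0 ≤ u → -(A * u) ≤ φ u := by
  have h1m' : Integrable ((Ioi (1:ℝ)).indicator id) m := (integrable_indicator_iff measurableSet_Ioi).2 h1m
  have hI : 0 ≤ ∫ z, (Ioi (1:ℝ)).indicator id z ∂m := by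
    apply integral_nonneg
    intro z
    apply indicator_nonneg
    intro x hx; exact zero_le_one.trans (le_of_lt hx)
  refine ⟨|β| + ∫ z, (Ioi (1:ℝ)).indicator id z ∂m, by positivity, fun u hu => ?_⟩
  rw [hφ.form' hu]
  have h1 : -((∫ z, (Ioi (1:ℝ)).indicator id z ∂m) * u) ≤ ∫ z, kerB z u ∂m := by
    rw [← integral_mul_const, ← integral_neg]
    apply integral_mono_ae (h1m'.mul_const u).neg (hφ.int_ker hu)
    filter_upwards [hφ.ae_pos] with z hz
    exact kerB_lower' hz hu
  have h2 : -(|β| * u) ≤ β * u := by nlinarith [neg_abs_le β]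
  have h3 : 0 ≤ σ ^ 2 * u ^ 2 / 2 := by positivity
  nlinarith

lemma phi_upper (hφ : IsBranchingMechanism φ β σ m) :
    ∃ C : ℝ, 0 ≤ C ∧ ∀ u, 0 ≤ u → φ u ≤ C * (u + u ^ 2) := by
  have hI : 0 ≤ ∫ z : ℝ, min 1 (z ^ 2) ∂m := integral_nonneg fun z => by positivity
  refine ⟨|β| + σ ^ 2 + ∫ z : ℝ, min 1 (z ^ 2) ∂m, by positivity, fun u hu => ?_⟩
  rw [hφ.form' hu]
  have h1 : ∫ z, kerB z u ∂m ≤ u ^ 2 * (∫ z : ℝ, min 1 (z ^ 2) ∂m) := by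
    rw [← integral_const_mul]
    apply integral_mono_ae (hφ.int_ker hu) (hφ.int_min.const_mul _)
    filter_upwards [hφ.ae_pos] with z hz
    exact kerB_upper hz hu
  have h2 : β * u ≤ |β| * u := by nlinarith [le_abs_self β]
  have h3 : 0 ≤ σ ^ 2 * u ^ 2 := by positivity
  have h4 : 0 ≤ |β| * u ^ 2 := by positivity
  have h5 : 0 ≤ σ ^ 2 * u := by positivity
  have h6 : 0 ≤ (∫ z : ℝ, min 1 (z ^ 2) ∂m) * u := by positivity
  nlinarith

end IsBranchingMechanism


/-! ### Part 2: the cumulant semigroup -/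

lemma antitone_aux {F F' : ℝ → ℝ} {T : ℝ} (hc : ContinuousOn F (Icc 0 T))
    (hd : ∀ t ∈ Ioo 0 T, HasDerivAt F (F' t) t) (hn : ∀ t ∈ Ioo 0 T, F' t ≤ 0) :
    ∀ t ∈ Icc 0 T, F t ≤ F 0 := by
  have h : AntitoneOn F (Icc 0 T) := by
    apply antitoneOn_of_deriv_nonpos (convex_Icc 0 T) hc
    · rw [interior_Icc]
      exact fun t ht => (hd t ht).differentiableAt.differentiableWithinAt
    · rw [interior_Icc]
      intro t ht
      rw [(hd t ht).deriv]; exact hn t ht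
  intro t ht
  exact h ⟨le_rfl, ht.1.trans ht.2⟩ ht ht.1

lemma gron_up {h h' : ℝ → ℝ} {T C D : ℝ} (hC : 0 ≤ C) (hD : 0 ≤ D) (hc : ContinuousOn h (Icc 0 T))
    (hd : ∀ t ∈ Ioo 0 T, HasDerivAt h (h' t) t) (hn : ∀ t ∈ Ioo 0 T, h' t ≤ C * h t + D) :
    ∀ t ∈ Icc 0 T, h t ≤ Real.exp (C * t) * (h 0 + D * t) := by
  intro t ht
  have := antitone_aux (F := fun s => Real.exp (-(C * s)) * h s - D * s)
    (F' := fun s => (Real.exp (-(C * s)) * (-(C * 1)) * h s + Real.exp (-(C * s)) * h' s) - D * 1)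
    (T := T) (by fun_prop)
    (fun s hs => ((((hasDerivAt_id s).const_mul C).neg.exp).mul (hd s hs)).sub
      ((hasDerivAt_id s).const_mul D)) (fun s hs => by
        have h1 := hn s hs
        have h2 := Real.exp_pos (-(C * s))
        have h3 : Real.exp (-(C * s)) ≤ 1 := Real.exp_le_one_iff.2 (by nlinarith [hs.1])
        nlinarith) t ht
  simp only [mul_zero, neg_zero, Real.exp_zero, one_mul, sub_zero] at this
  have h4 : Real.exp (C * t) * Real.exp (-(C * t)) = 1 := by rw [← Real.exp_add]; simp
  have h5 := Real.exp_pos (C * t)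
  calc h t = Real.exp (C * t) * (Real.exp (-(C * t)) * h t) := by rw [← mul_assoc, h4, one_mul]
    _ ≤ _ := by gcongr; linarith

lemma gron_low {h h' : ℝ → ℝ} {T C A B : ℝ} (hC : 0 ≤ C) (hA : 0 ≤ A) (hB : 0 ≤ B)
    (hc : ContinuousOn h (Icc 0 T))
    (hd : ∀ t ∈ Ioo 0 T, HasDerivAt h (h' t) t)
    (hn : ∀ t ∈ Ioo 0 T, -(C * h t) - A + B ≤ h' t) :
    ∀ t ∈ Icc 0 T, h 0 + B * t ≤ Real.exp (C * t) * (h t + A * t) := by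
  intro t ht
  have := antitone_aux (F := fun s => -(Real.exp (C * s) * h s + A * Real.exp (C * t) * s - B * s))
    (F' := fun s => -((Real.exp (C * s) * (C * 1) * h s + Real.exp (C * s) * h' s)
      + A * Real.exp (C * t) * 1 - B * 1))
    (T := t) ((by fun_prop : ContinuousOn _ (Icc 0 T)).mono (Icc_subset_Icc_right ht.2))
    (fun s hs => (((((hasDerivAt_id s).const_mul C).exp).mul
      (hd s ⟨hs.1, hs.2.trans_le ht.2⟩)).add
      ((hasDerivAt_id s).const_mul _)).sub ((hasDerivAt_id s).const_mul B) |>.neg) (fun s hs => by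
        have h1 := hn s ⟨hs.1, hs.2.trans_le ht.2⟩
        have h2 : 1 ≤ Real.exp (C * s) := Real.one_le_exp (by nlinarith [hs.1])
        have h3 : Real.exp (C * s) ≤ Real.exp (C * t) := Real.exp_le_exp.2 (by nlinarith [hs.2])
        have h4 : Real.exp (C * s) * (-(C * h s) - A + B) ≤ Real.exp (C * s) * h' s := by gcongr
        have h5 : A * Real.exp (C * s) ≤ A * Real.exp (C * t) := by gcongr
        have h6 : B * 1 ≤ B * Real.exp (C * s) := by gcongr
        nlinarith) t ⟨ht.1, le_rfl⟩
  simp only [mul_zero, Real.exp_zero, one_mul, sub_zero, add_zero] at this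
  nlinarith

section cumulant

variable {φ : ℝ → ℝ} {β σ : ℝ} {m : Measure ℝ}

lemma y_cont {y : ℝ → ℝ} {l T : ℝ}
    (hy : ∀ t, 0 ≤ t → 0 ≤ y t ∧ y t = l - ∫ s in (0:ℝ)..t, φ (y s)) (hT : 0 ≤ T)
    (hi : IntervalIntegrable (fun s => φ (y s)) volume 0 T) : ContinuousOn y (Icc 0 T) := by
  have h := intervalIntegral.continuousOn_primitive_interval' hi left_mem_uIcc
  rw [uIcc_of_le hT] at h
  exact (continuousOn_const.sub h).congr fun t ht => (hy t ht.1).2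

lemma phiy_cont (hφ : IsBranchingMechanism φ β σ m) {y : ℝ → ℝ} {l T : ℝ}
    (hy : ∀ t, 0 ≤ t → 0 ≤ y t ∧ y t = l - ∫ s in (0:ℝ)..t, φ (y s)) (hT : 0 ≤ T)
    (hi : IntervalIntegrable (fun s => φ (y s)) volume 0 T) :
    ContinuousOn (fun s => φ (y s)) (Icc 0 T) :=
  hφ.phi_cont.comp (y_cont hy hT hi) fun t ht => (hy t ht.1).1

lemma y_deriv (hφ : IsBranchingMechanism φ β σ m) {y : ℝ → ℝ} {l T : ℝ}
    (hy : ∀ t, 0 ≤ t → 0 ≤ y t ∧ y t = l - ∫ s in (0:ℝ)..t, φ (y s)) (hT : 0 ≤ T)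
    (hi : IntervalIntegrable (fun s => φ (y s)) volume 0 T) {t : ℝ} (ht : t ∈ Ioo 0 T) :
    HasDerivAt y (-φ (y t)) t := by
  have hc := phiy_cont hφ hy hT hi
  have hco : ContinuousOn (fun s => φ (y s)) (Ioo 0 T) := hc.mono Ioo_subset_Icc_self
  have h := intervalIntegral.integral_hasDerivAt_right (a := 0) (b := t)
    (hi.mono_set (by rw [uIcc_of_le hT, uIcc_of_le ht.1.le]; exact Icc_subset_Icc_right ht.2.le))
    (hco.stronglyMeasurableAtFilter isOpen_Ioo t ht)
    (hco.continuousAt (isOpen_Ioo.mem_nhds ht))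
  refine (h.const_sub l).congr_of_eventuallyEq ?_
  filter_upwards [isOpen_Ioo.mem_nhds ht] with s hs
  exact (hy s hs.1.le).2

lemma y_bound (hφ : IsBranchingMechanism φ β σ m) {y : ℝ → ℝ} {l T A : ℝ} (hA : 0 ≤ A)
    (hAφ : ∀ u, 0 ≤ u → -(A * (1 + u)) ≤ φ u)
    (hy : ∀ t, 0 ≤ t → 0 ≤ y t ∧ y t = l - ∫ s in (0:ℝ)..t, φ (y s)) (hT : 0 ≤ T)
    (hi : IntervalIntegrable (fun s => φ (y s)) volume 0 T) {t : ℝ} (ht : t ∈ Icc 0 T) :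
    y t ≤ Real.exp (A * t) * (l + A * t) := by
  have h0 : y 0 = l := by have := (hy 0 le_rfl).2; simpa using this
  have := gron_up (h := y) (h' := fun s => -φ (y s)) hA hA (y_cont hy hT hi)
    (fun s hs => y_deriv hφ hy hT hi hs) (fun s hs => by
      have := hAφ (y s) (hy s hs.1.le).1; linarith) t ht
  rwa [h0] at this

lemma y_integrable (hφ : IsBranchingMechanism φ β σ m) {y : ℝ → ℝ} {l : ℝ}
    (hy : ∀ t, 0 ≤ t → 0 ≤ y t ∧ y t = l - ∫ s in (0:ℝ)..t, φ (y s)) {T : ℝ} (hT : 0 ≤ T) :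
    IntervalIntegrable (fun s => φ (y s)) volume 0 T := by
  obtain ⟨A, hA, hAφ⟩ := hφ.phi_lower
  by_contra hn
  have h0 : y 0 = l := by have := (hy 0 le_rfl).2; simpa using this
  have hl : 0 ≤ l := h0 ▸ (hy 0 le_rfl).1
  let S := {t : ℝ | 0 ≤ t ∧ IntervalIntegrable (fun s => φ (y s)) volume 0 t}
  have hdown : ∀ t ∈ S, ∀ s, 0 ≤ s → s ≤ t → s ∈ S := fun t ht s hs hst =>
    ⟨hs, ht.2.mono_set (by rw [uIcc_of_le ht.1, uIcc_of_le hs]; exact Icc_subset_Icc_right hst)⟩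
  have hS0 : (0:ℝ) ∈ S := ⟨le_rfl, by simp⟩
  have hSb : ∀ t ∈ S, t ≤ T := by
    intro t ht
    by_contra h
    push Not at h
    exact hn (hdown t ht T hT h.le).2
  have hbdd : BddAbove S := ⟨T, hSb⟩
  set τ := sSup S with hτ
  have hτ0 : 0 ≤ τ := le_csSup hbdd hS0
  have hτT : τ ≤ T := csSup_le ⟨0, hS0⟩ hSb
  have hlt : ∀ t, 0 ≤ t → t < τ → t ∈ S := by
    intro t ht htτ
    obtain ⟨s, hs, hts⟩ := exists_lt_of_lt_csSup ⟨0, hS0⟩ htτ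
    exact hdown s hs t ht hts.le
  have hgt : ∀ t, τ < t → y t = l := by
    intro t ht
    have ht0 : 0 ≤ t := hτ0.trans ht.le
    rw [(hy t ht0).2, intervalIntegral.integral_undef, sub_zero]
    intro h
    exact absurd (le_csSup hbdd (show t ∈ S from ⟨ht0, h⟩)) (not_le.2 ht)
  apply hn
  rw [intervalIntegrable_iff_integrableOn_Ioc_of_le hT, ← Ioc_union_Ioc_eq_Ioc hτ0 hτT]
  apply IntegrableOn.union
  · rw [integrableOn_Ioc_iff_integrableOn_Ioo]
    set B := Real.exp (A * τ) * (l + A * τ)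
    obtain ⟨M, hM⟩ := isCompact_Icc.exists_bound_of_continuousOn
      (hφ.phi_cont.mono (fun u hu => hu.1 : Icc 0 B ⊆ Ici 0))
    have hco : ContinuousOn (fun s => φ (y s)) (Ioo 0 τ) := by
      intro s hs
      have h1 : (s + τ) / 2 ∈ S := hlt _ (by linarith [hs.1]) (by linarith [hs.2])
      have h2 := phiy_cont hφ hy h1.1 h1.2
      exact ((h2.mono Ioo_subset_Icc_self).continuousAt
        (isOpen_Ioo.mem_nhds ⟨hs.1, by linarith [hs.2]⟩)).continuousWithinAt
    have hfin : IntegrableOn (fun _ : ℝ => M) (Ioo 0 τ) volume := by simp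
    refine Integrable.mono' hfin ?_ ?_
    · exact hco.aestronglyMeasurable measurableSet_Ioo
    · rw [ae_restrict_iff' measurableSet_Ioo]
      refine ae_of_all _ fun s hs => hM _ ⟨(hy s hs.1.le).1, ?_⟩
      have h1 := hlt s hs.1.le hs.2
      refine (y_bound hφ hA hAφ hy h1.1 h1.2 ⟨h1.1, le_rfl⟩).trans ?_
      have := hs.2.le
      have := hs.1.le
      show _ ≤ Real.exp (A * τ) * (l + A * τ)
      gcongr
  · have : IntegrableOn (fun _ : ℝ => φ l) (Ioc τ T) volume := by simp
    refine this.congr_fun ?_ measurableSet_Ioc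
    intro s hs
    simp only [hgt s hs.1]

variable {v : ℝ → ℝ → ℝ}

lemma v_zero_left (hv : IsCumulant φ v) {l : ℝ} (hl : 0 ≤ l) : v 0 l = l := by
  have := (hv l hl 0 le_rfl).2; simpa using this

lemma v_nonneg (hv : IsCumulant φ v) {l t : ℝ} (hl : 0 ≤ l) (ht : 0 ≤ t) : 0 ≤ v t l :=
  (hv l hl t ht).1

lemma v_cont (hφ : IsBranchingMechanism φ β σ m) (hv : IsCumulant φ v) {l : ℝ} (hl : 0 ≤ l) (T : ℝ) :
    ContinuousOn (fun s => v s l) (Icc 0 T) := by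
  rcases le_or_gt 0 T with h | h
  · exact y_cont (hv l hl) h (y_integrable hφ (hv l hl) h)
  · simp [Icc_eq_empty (not_le.2 h)]

lemma v_deriv (hφ : IsBranchingMechanism φ β σ m) (hv : IsCumulant φ v) {l : ℝ} (hl : 0 ≤ l)
    {t : ℝ} (ht : 0 < t) : HasDerivAt (fun s => v s l) (-φ (v t l)) t :=
  y_deriv hφ (hv l hl) (T := t + 1) (by linarith) (y_integrable hφ (hv l hl) (by linarith))
    ⟨ht, by linarith⟩

lemma v_deriv0 (hφ : IsBranchingMechanism φ β σ m) (hv : IsCumulant φ v) {l : ℝ} (hl : 0 ≤ l)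
    {t : ℝ} (ht : 0 ≤ t) : HasDerivWithinAt (fun s => v s l) (-φ (v t l)) (Ici t) t := by
  rcases ht.eq_or_lt with rfl | ht
  · have hi := y_integrable hφ (hv l hl) (T := 1) zero_le_one
    have hc := phiy_cont hφ (hv l hl) zero_le_one hi
    have hm : Icc (0:ℝ) 1 ∈ nhdsWithin 0 (Ici 0) := Icc_mem_nhdsGE_of_mem ⟨le_rfl, zero_lt_one⟩
    have hm' : Icc (0:ℝ) 1 ∈ nhdsWithin 0 (Ioi 0) := nhdsWithin_mono _ Ioi_subset_Ici_self hm
    have h := intervalIntegral.integral_hasDerivWithinAt_right (a := 0) (b := 0)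
      (f := fun s => φ (v s l)) (s := Ici 0) (t := Ioi 0)
      (by simp) ⟨Icc 0 1, hm', hc.aestronglyMeasurable measurableSet_Icc⟩
      (((hc 0 ⟨le_rfl, zero_le_one⟩).mono_of_mem_nhdsWithin hm).mono Ioi_subset_Ici_self)
    refine (h.const_sub l).congr (fun s hs => (hv l hl s hs).2) ((hv l hl 0 le_rfl).2)
  · exact (v_deriv hφ hv hl ht).hasDerivWithinAt

lemma v_bounds (hφ : IsBranchingMechanism φ β σ m) (hv : IsCumulant φ v) {T R : ℝ} (hT : 0 ≤ T)
    (hR : 0 ≤ R) :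
    ∃ B c : ℝ, 0 < c ∧ ∀ l ∈ Icc 0 R, ∀ t ∈ Icc 0 T, c * l ≤ v t l ∧ v t l ≤ B := by
  obtain ⟨A, hA, hAφ⟩ := hφ.phi_lower
  obtain ⟨C, hC, hCφ⟩ := hφ.phi_upper
  set B := Real.exp (A * T) * (R + A * T) with hB
  have hB0 : 0 ≤ B := by positivity
  have hup : ∀ l ∈ Icc 0 R, ∀ t ∈ Icc 0 T, v t l ≤ B := by
    intro l hl t ht
    refine (y_bound hφ hA hAφ (hv l hl.1) ht.1 (y_integrable hφ (hv l hl.1) ht.1)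
      ⟨ht.1, le_rfl⟩).trans ?_
    have := hl.1
    have := hl.2
    have := ht.1
    have := ht.2
    rw [hB]
    gcongr
  refine ⟨B, Real.exp (-(C * (1 + B) * T)), Real.exp_pos _, fun l hl t ht => ⟨?_, hup l hl t ht⟩⟩
  have := gron_low (h := fun s => v s l) (h' := fun s => -φ (v s l)) (T := T) (C := C * (1 + B))
    (A := 0) (B := 0) (by positivity) le_rfl le_rfl (v_cont hφ hv hl.1 T)
    (fun s hs => v_deriv hφ hv hl.1 hs.1) (fun s hs => by
      have h1 := v_nonneg hv hl.1 hs.1.le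
      have h2 := hup l hl s ⟨hs.1.le, hs.2.le⟩
      have h3 := hCφ _ h1
      have h4 : C * (v s l + v s l ^ 2) ≤ C * ((1 + B) * v s l) := by
        gcongr; nlinarith
      linarith) t ht
  simp only [v_zero_left hv hl.1, zero_mul, add_zero] at this
  have h5 : Real.exp (-(C * (1 + B) * T)) ≤ Real.exp (-(C * (1 + B) * t)) := by
    apply Real.exp_le_exp.2
    have := mul_le_mul_of_nonneg_left ht.2 (by positivity : 0 ≤ C * (1 + B))
    linarith
  calc _ ≤ Real.exp (-(C * (1 + B) * t)) * (Real.exp (C * (1 + B) * t) * v t l) := by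
        gcongr; exact hl.1
    _ = v t l := by rw [← mul_assoc, ← Real.exp_add]; simp

lemma v_pos (hφ : IsBranchingMechanism φ β σ m) (hv : IsCumulant φ v) {l t : ℝ} (hl : 0 < l)
    (ht : 0 ≤ t) : 0 < v t l := by
  obtain ⟨B, c, hc, h⟩ := v_bounds hφ hv ht hl.le
  have := (h l ⟨hl.le, le_rfl⟩ t ⟨ht, le_rfl⟩).1
  have : 0 < c * l := by positivity
  linarith

lemma v_upper (hφ : IsBranchingMechanism φ β σ m) (hv : IsCumulant φ v) {A : ℝ} (hA : 0 ≤ A)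
    (hAφ : ∀ u, 0 ≤ u → -(A * u) ≤ φ u) {l t : ℝ} (hl : 0 ≤ l) (ht : 0 ≤ t) :
    v t l ≤ Real.exp (A * t) * l := by
  have := gron_up (h := fun s => v s l) (h' := fun s => -φ (v s l)) (T := t) (D := 0) hA le_rfl
    (v_cont hφ hv hl t)
    (fun s hs => v_deriv hφ hv hl hs.1) (fun s hs => by
      have := hAφ (v s l) (v_nonneg hv hl hs.1.le); linarith) t ⟨ht, le_rfl⟩
  simpa [v_zero_left hv hl] using this

lemma v_flow (hφ : IsBranchingMechanism φ β σ m) (hv : IsCumulant φ v) {l s t : ℝ} (hl : 0 < l)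
    (hs : 0 ≤ s) (ht : 0 ≤ t) : v (t + s) l = v t (v s l) := by
  have hl' := v_pos hφ hv hl hs
  obtain ⟨B1, c1, hc1, h1⟩ := v_bounds hφ hv (add_nonneg ht hs) hl.le
  obtain ⟨B2, c2, hc2, h2⟩ := v_bounds hφ hv ht hl'.le
  set δ := min (c1 * l) (c2 * v s l)
  set B := max B1 B2
  have hδ : 0 < δ := lt_min (by positivity) (by positivity)
  obtain ⟨L, hL, hLip⟩ := hφ.phi_lip (B := B) hδ
  have key := ODE_solution_unique_of_mem_Icc_right (v := fun _ u => -φ u) (s := fun _ => Icc δ B)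
    (K := L.toNNReal) (f := fun r => v (r + s) l) (g := fun r => v r (v s l)) (a := 0) (b := t)
    (by
      intro r _
      apply LipschitzOnWith.of_dist_le_mul
      intro a ha b hb
      rw [Real.dist_eq, Real.dist_eq, Real.coe_toNNReal _ hL, ← abs_neg]
      convert hLip a ha b hb using 2
      ring)
    ((v_cont hφ hv hl.le (t + s)).comp (by fun_prop) fun r hr =>
      ⟨by linarith [hr.1], by linarith [hr.2]⟩)
    (by
      intro r hr
      have h := v_deriv0 hφ hv hl.le (t := r + s) (by linarith [hr.1])
      have h3 : HasDerivWithinAt (fun r => r + s) 1 (Ici r) r :=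
        ((hasDerivAt_id r).add_const s).hasDerivWithinAt
      have := h.scomp r h3 (fun u hu => by simpa using hu)
      rw [one_smul] at this
      exact this)
    (by
      intro r hr
      have := h1 l ⟨hl.le, le_rfl⟩ (r + s) ⟨by linarith [hr.1], by linarith [hr.2]⟩
      exact ⟨(min_le_left _ _).trans this.1, this.2.trans (le_max_left _ _)⟩)
    (v_cont hφ hv hl'.le t)
    (fun r hr => v_deriv0 hφ hv hl'.le hr.1)
    (by
      intro r hr
      have := h2 (v s l) ⟨hl'.le, le_rfl⟩ r ⟨by linarith [hr.1], by linarith [hr.2]⟩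
      exact ⟨(min_le_right _ _).trans this.1, this.2.trans (le_max_right _ _)⟩)
    (by simp only [zero_add]; rw [v_zero_left hv hl'.le])
  exact key ⟨ht, le_rfl⟩

end cumulant


/-! ### Part 3: the forward equation -/

section fwd
variable {φ : ℝ → ℝ} {β σ : ℝ} {m : Measure ℝ} {v : ℝ → ℝ → ℝ} {Q : ℝ → ℝ → Measure ℝ}

lemma ae_nonneg_of_Iio {μ : Measure ℝ} (h : μ (Iio 0) = 0) : ∀ᵐ y ∂μ, 0 ≤ y := by
  rw [ae_iff]
  convert h using 2
  ext z; simp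

lemma int_exp_aux {μ : Measure ℝ} [IsProbabilityMeasure μ] (h : ∀ᵐ y ∂μ, 0 ≤ y) {l : ℝ} (hl : 0 ≤ l) :
    Integrable (fun y => Real.exp (-(l * y))) μ := by
  refine (integrable_const (1:ℝ)).mono' (by fun_prop) ?_
  filter_upwards [h] with y hy
  rw [Real.norm_eq_abs, abs_of_pos (Real.exp_pos _)]
  exact Real.exp_le_one_iff.2 (by nlinarith)

lemma mul_exp_le {l y : ℝ} : l * y * Real.exp (-(l * y)) ≤ 1 - Real.exp (-(l * y)) := by
  have h1 := Real.add_one_le_exp (l * y)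
  have h2 := Real.exp_pos (-(l * y))
  have h3 : Real.exp (-(l * y)) * Real.exp (l * y) = 1 := by rw [← Real.exp_add]; simp
  nlinarith

lemma int_mul_exp_aux {μ : Measure ℝ} [IsProbabilityMeasure μ] (h : ∀ᵐ y ∂μ, 0 ≤ y) {l : ℝ} (hl : 0 < l) :
    Integrable (fun y => y * Real.exp (-(l * y))) μ := by
  refine (integrable_const (l⁻¹:ℝ)).mono' (by fun_prop) ?_
  filter_upwards [h] with y hy
  have h2 := Real.exp_pos (-(l * y))
  rw [Real.norm_eq_abs, abs_of_nonneg (by positivity)]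
  have := mul_exp_le (l := l) (y := y)
  rw [← one_div, le_div_iff₀ hl]
  nlinarith

lemma laplace_deriv {μ : Measure ℝ} [IsProbabilityMeasure μ] (h : ∀ᵐ y ∂μ, 0 ≤ y) {l : ℝ} (hl : 0 < l) :
    HasDerivAt (fun l => ∫ y, Real.exp (-(l * y)) ∂μ) (-∫ y, y * Real.exp (-(l * y)) ∂μ) l := by
  have hmem : l ∈ interior (ProbabilityTheory.integrableExpSet (fun y : ℝ => -y) μ) := by
    rw [mem_interior_iff_mem_nhds]
    filter_upwards [Ioi_mem_nhds hl] with a ha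
    have := int_exp_aux h (le_of_lt ha)
    simp only [ProbabilityTheory.integrableExpSet, mem_ofPred_eq]
    simpa using this
  have := ProbabilityTheory.hasDerivAt_mgf hmem
  unfold ProbabilityTheory.mgf at this
  simp only [mul_neg, neg_mul, integral_neg] at this
  exact this

lemma v_zero_right (hQ : IsCBSemigroup v Q) {t : ℝ} (ht : 0 ≤ t) : v t 0 = 0 := by
  obtain ⟨hp, -, h⟩ := hQ t 1 ht zero_le_one
  have := h 0 le_rfl
  simp at this
  have := (Real.exp_eq_one_iff _).1 this.symm
  linarith

lemma v_differentiable (hQ : IsCBSemigroup v Q) {t l : ℝ} (ht : 0 ≤ t) (hl : 0 < l) :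
    DifferentiableAt ℝ (v t) l := by
  obtain ⟨hp, h0, h⟩ := hQ t 1 ht zero_le_one
  have h1 := laplace_deriv (ae_nonneg_of_Iio h0) hl
  have h2 : v t =ᶠ[nhds l] fun l => -Real.log (∫ y, Real.exp (-(l * y)) ∂(Q t 1)) := by
    filter_upwards [Ioi_mem_nhds hl] with a ha
    rw [h a (le_of_lt ha), Real.log_exp]; ring
  refine DifferentiableAt.congr_of_eventuallyEq ?_ h2
  refine (h1.differentiableAt.log ?_).neg
  rw [h l hl.le]
  exact (Real.exp_pos _).ne'

lemma v_fwd (hφ : IsBranchingMechanism φ β σ m) (hv : IsCumulant φ v) (hQ : IsCBSemigroup v Q)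
    {t l : ℝ} (ht : 0 ≤ t) (hl : 0 < l) : φ l * deriv (v t) l = φ (v t l) := by
  have h1 : HasDerivAt (v t) (deriv (v t) l) l := (v_differentiable hQ ht hl).hasDerivAt
  have h2 := v_deriv0 hφ hv hl.le (t := 0) le_rfl
  rw [v_zero_left hv hl.le] at h2
  have h3 : HasDerivWithinAt (fun s => v t (v s l)) (deriv (v t) l * -φ l) (Ici 0) 0 := by
    refine HasDerivAt.comp_hasDerivWithinAt (h₂ := v t) (0:ℝ) ?_ h2
    rw [v_zero_left hv hl.le]; exact h1
  have h4 : HasDerivWithinAt (fun s => v (t + s) l) (-φ (v t l)) (Ici 0) 0 := by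
    have h := v_deriv0 hφ hv hl.le ht
    have h5 : HasDerivWithinAt (fun r : ℝ => t + r) 1 (Ici 0) 0 :=
      ((hasDerivAt_id (0:ℝ)).const_add t).hasDerivWithinAt
    have h6 := HasDerivWithinAt.scomp_of_eq (g₁ := fun s => v s l) (0:ℝ) h h5
      (fun u hu => by simpa using hu) (by simp)
    rw [one_smul] at h6
    exact h6
  have h5 : HasDerivWithinAt (fun s => v t (v s l)) (-φ (v t l)) (Ici 0) 0 :=
    h4.congr (fun s hs => (v_flow hφ hv hl hs ht).symm) (v_flow hφ hv hl le_rfl ht).symm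
  have := (uniqueDiffOn_Ici (0:ℝ) 0 self_mem_Ici).eq_deriv _ h3 h5
  linarith

lemma fwd_exp (hφ : IsBranchingMechanism φ β σ m) (hv : IsCumulant φ v) (hQ : IsCBSemigroup v Q)
    {t x l : ℝ} (ht : 0 < t) (hx : 0 ≤ x) (hl : 0 ≤ l) :
    HasDerivAt (fun s => ∫ y, Real.exp (-(l * y)) ∂(Q s x))
      (∫ y, φ l * (y * Real.exp (-(l * y))) ∂(Q t x)) t := by
  have hcongr : (fun s => ∫ y, Real.exp (-(l * y)) ∂(Q s x)) =ᶠ[nhds t]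
      fun s => Real.exp (-(x * v s l)) := by
    filter_upwards [Ioi_mem_nhds ht] with s hs
    exact (hQ s x (le_of_lt hs) hx).2.2 l hl
  refine HasDerivAt.congr_of_eventuallyEq ?_ hcongr
  rcases hl.eq_or_lt with rfl | hl
  · rw [hφ.phi_zero]
    simp only [zero_mul, integral_zero]
    have : (fun s => Real.exp (-(x * v s 0))) =ᶠ[nhds t] fun s => 1 := by
      filter_upwards [Ioi_mem_nhds ht] with s hs
      rw [v_zero_right hQ (le_of_lt hs)]; simp
    exact (hasDerivAt_const t (1:ℝ)).congr_of_eventuallyEq this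
  · obtain ⟨hp, h0, h⟩ := hQ t x ht.le hx
    have h1 := laplace_deriv (ae_nonneg_of_Iio h0) hl
    have h2 : HasDerivAt (fun l => ∫ y, Real.exp (-(l * y)) ∂(Q t x))
        (Real.exp (-(x * v t l)) * -(x * deriv (v t) l)) l := by
      refine HasDerivAt.congr_of_eventuallyEq (f := fun l => Real.exp (-(x * v t l))) ?_ ?_
      · exact (((v_differentiable hQ ht.le hl).hasDerivAt).const_mul x).neg.exp
      · filter_upwards [Ioi_mem_nhds hl] with a ha
        exact h a (le_of_lt ha)
    have h3 := h1.unique h2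
    have h4 := ((v_deriv hφ hv hl.le ht).const_mul x).neg.exp
    refine h4.congr_deriv ?_
    rw [integral_const_mul, ← v_fwd hφ hv hQ ht.le hl]
    have h5 : ∫ y, y * Real.exp (-(l * y)) ∂(Q t x) = Real.exp (-(x * v t l)) * (x * deriv (v t) l) := by
      linarith
    rw [h5, Pi.neg_apply]; ring

lemma cont_exp (hφ : IsBranchingMechanism φ β σ m) (hv : IsCumulant φ v) (hQ : IsCBSemigroup v Q)
    {x l : ℝ} (T : ℝ) (hx : 0 ≤ x) (hl : 0 ≤ l) :
    ContinuousOn (fun s => ∫ y, Real.exp (-(l * y)) ∂(Q s x)) (Icc 0 T) := by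
  have := v_cont hφ hv hl T
  have h2 : ContinuousOn (fun s => Real.exp (-(x * v s l))) (Icc 0 T) := by fun_prop
  exact h2.congr fun s hs => (hQ s x hs.1 hx).2.2 l hl

lemma mean_exp_le (hφ : IsBranchingMechanism φ β σ m) (hv : IsCumulant φ v) (hQ : IsCBSemigroup v Q)
    {A : ℝ} (hA : 0 ≤ A) (hAφ : ∀ u, 0 ≤ u → -(A * u) ≤ φ u)
    {t x l : ℝ} (ht : 0 ≤ t) (hx : 0 ≤ x) (hl : 0 < l) :
    ∫ y, y * Real.exp (-(l * y)) ∂(Q t x) ≤ x * Real.exp (A * t) := by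
  obtain ⟨hp, h0, h⟩ := hQ t x ht hx
  have hae := ae_nonneg_of_Iio h0
  have h1 : l * ∫ y, y * Real.exp (-(l * y)) ∂(Q t x) ≤ 1 - Real.exp (-(x * v t l)) := by
    rw [← h l hl.le, ← integral_const_mul]
    have : (1:ℝ) = ∫ y, 1 ∂(Q t x) := by simp
    conv_rhs => rw [this]
    rw [← integral_sub (integrable_const _) (int_exp_aux hae hl.le)]
    refine integral_mono ((int_mul_exp_aux hae hl).const_mul l)
      ((integrable_const _).sub (int_exp_aux hae hl.le)) fun y => ?_
    have := mul_exp_le (l := l) (y := y)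
    simp only
    linarith
  have h2 : 1 - Real.exp (-(x * v t l)) ≤ x * v t l := by
    have := Real.add_one_le_exp (-(x * v t l)); linarith
  have h3 : x * v t l ≤ x * (Real.exp (A * t) * l) := by
    gcongr; exact v_upper hφ hv hA hAφ hl.le ht
  have h4 : l * ∫ y, y * Real.exp (-(l * y)) ∂(Q t x) ≤ l * (x * Real.exp (A * t)) := by linarith
  exact le_of_mul_le_mul_left h4 hl

lemma mean_exp_ge (hφ : IsBranchingMechanism φ β σ m) (hv : IsCumulant φ v) (hQ : IsCBSemigroup v Q)
    {T x l : ℝ} (hT : 0 ≤ T) (hx : 0 < x) (hl : 0 < l) :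
    ∃ c : ℝ, 0 < c ∧ ∀ t ∈ Icc 0 T, c ≤ ∫ y, y * Real.exp (-(l * y)) ∂(Q t x) := by
  set F : ℝ → ℝ := fun s => (∫ y, Real.exp (-(l * y)) ∂(Q s x)) -
    ∫ y, Real.exp (-((2 * l) * y)) ∂(Q s x) with hF
  have hFc : ContinuousOn F (Icc 0 T) :=
    (cont_exp hφ hv hQ T hx.le hl.le).sub (cont_exp hφ hv hQ T hx.le (by positivity))
  have hFle : ∀ t ∈ Icc 0 T, F t ≤ l * ∫ y, y * Real.exp (-(l * y)) ∂(Q t x) := by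
    intro t ht
    obtain ⟨hp, h0, h⟩ := hQ t x ht.1 hx.le
    have hae := ae_nonneg_of_Iio h0
    have hi2 := int_exp_aux hae (l := 2 * l) (by positivity)
    rw [hF]
    simp only
    rw [← integral_sub (int_exp_aux hae hl.le) hi2, ← integral_const_mul]
    refine integral_mono ((int_exp_aux hae hl.le).sub hi2) ((int_mul_exp_aux hae hl).const_mul l)
      fun y => ?_
    simp only
    have e : Real.exp (-((2 * l) * y)) = Real.exp (-(l * y)) * Real.exp (-(l * y)) := by
      rw [← Real.exp_add]; congr 1; ring
    have := Real.add_one_le_exp (-(l * y))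
    have := Real.exp_pos (-(l * y))
    rw [e]; nlinarith
  have hFpos : ∀ t ∈ Icc 0 T, 0 < F t := by
    intro t ht
    obtain ⟨hp, h0, h⟩ := hQ t x ht.1 hx.le
    have hae := ae_nonneg_of_Iio h0
    have hi2 := int_exp_aux hae (l := 2 * l) (by positivity)
    rw [hF]
    simp only
    rw [← integral_sub (int_exp_aux hae hl.le) hi2]
    have hnn : 0 ≤ᵐ[Q t x] fun y => Real.exp (-(l * y)) - Real.exp (-((2 * l) * y)) := by
      filter_upwards [hae] with y hy
      have : Real.exp (-((2 * l) * y)) ≤ Real.exp (-(l * y)) := Real.exp_le_exp.2 (by nlinarith)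
      simp only [Pi.zero_apply]; linarith
    have hge := integral_nonneg_of_ae hnn
    refine lt_of_le_of_ne hge fun heq => ?_
    have hz := (integral_eq_zero_iff_of_nonneg_ae hnn ((int_exp_aux hae hl.le).sub hi2)).1 heq.symm
    have hone : ∫ y, Real.exp (-(l * y)) ∂(Q t x) = 1 := by
      have : ∫ y, Real.exp (-(l * y)) ∂(Q t x) = ∫ y, 1 ∂(Q t x) := by
        apply integral_congr_ae
        filter_upwards [hz] with y hy
        simp only [Pi.zero_apply] at hy
        have h1 : -(l * y) = -((2 * l) * y) := Real.exp_injective (by linarith)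
        have : l * y = 0 := by linarith
        rw [this]; simp
      rw [this]; simp
    rw [h l hl.le, Real.exp_eq_one_iff] at hone
    have := v_pos hφ hv hl ht.1
    nlinarith
  obtain ⟨t0, ht0, hmin⟩ := isCompact_Icc.exists_isMinOn ⟨0, ⟨le_rfl, hT⟩⟩ hFc
  refine ⟨F t0 / l, div_pos (hFpos t0 ht0) hl, fun t ht => ?_⟩
  rw [div_le_iff₀ hl, mul_comm]
  exact (hmin ht).trans (hFle t ht)

end fwd


/-! ### Part 4: the test functions `(1 - e^{-l y})^n` and the generator -/

/-- test function -/
def qf (n : ℕ) (l y : ℝ) : ℝ := (1 - Real.exp (-(l * y))) ^ n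

/-- binomial coefficients with sign -/
def cf (n j : ℕ) : ℝ := (-1) ^ j * (n.choose j : ℝ)

/-- first derivative of `qf (k+2)` -/
def qf1 (k : ℕ) (l y : ℝ) : ℝ :=
  (k + 2 : ℝ) * (1 - Real.exp (-(l * y))) ^ (k + 1) * (l * Real.exp (-(l * y)))

/-- second derivative of `qf (k+2)` -/
def qf2 (k : ℕ) (l y : ℝ) : ℝ :=
  (k + 2 : ℝ) * l ^ 2 * ((k + 1 : ℝ) * (1 - Real.exp (-(l * y))) ^ k * Real.exp (-(l * y)) ^ 2
    - (1 - Real.exp (-(l * y))) ^ (k + 1) * Real.exp (-(l * y)))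

/-- the generator applied to `qf n l` -/
def genq (φ : ℝ → ℝ) (n : ℕ) (l y : ℝ) : ℝ :=
  ∑ j ∈ Finset.range (n + 1), cf n j * (φ (j * l) * (y * Real.exp (-(j * l * y))))

lemma qf_sum (n : ℕ) (l y : ℝ) :
    qf n l y = ∑ j ∈ Finset.range (n + 1), cf n j * Real.exp (-(j * l * y)) := by
  unfold qf cf
  rw [sub_eq_neg_add, add_pow]
  refine Finset.sum_congr rfl fun j _ => ?_
  rw [one_pow, mul_one, neg_pow, ← Real.exp_nat_mul]
  have : (j : ℝ) * -(l * y) = -(j * l * y) := by ring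
  rw [this]; ring

lemma A_deriv (l y : ℝ) :
    HasDerivAt (fun y => 1 - Real.exp (-(l * y))) (l * Real.exp (-(l * y))) y := by
  have h1 : HasDerivAt (fun y => -(l * y)) (-(l * 1)) y := ((hasDerivAt_id y).const_mul l).neg
  refine (h1.exp.const_sub 1).congr_deriv ?_
  ring

lemma E_deriv (l y : ℝ) :
    HasDerivAt (fun y => Real.exp (-(l * y))) (-(l * Real.exp (-(l * y)))) y := by
  have h1 : HasDerivAt (fun y => -(l * y)) (-(l * 1)) y := ((hasDerivAt_id y).const_mul l).neg
  refine h1.exp.congr_deriv ?_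
  ring

lemma qf_deriv (k : ℕ) (l y : ℝ) : HasDerivAt (qf (k + 2) l) (qf1 k l y) y := by
  unfold qf qf1
  refine ((A_deriv l y).pow (k + 2)).congr_deriv ?_
  push_cast
  simp only

lemma qf1_deriv (k : ℕ) (l y : ℝ) : HasDerivAt (qf1 k l) (qf2 k l y) y := by
  unfold qf1 qf2
  have h := ((((A_deriv l y).pow (k + 1)).const_mul (k + 2 : ℝ))).mul ((E_deriv l y).const_mul l)
  refine h.congr_deriv ?_
  simp only [Pi.pow_apply, Pi.mul_apply, add_tsub_cancel_right]
  push_cast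
  ring

lemma qf1_sum (k : ℕ) (l y : ℝ) :
    qf1 k l y = ∑ j ∈ Finset.range (k + 2 + 1), cf (k + 2) j * -(j * l * Real.exp (-(j * l * y))) := by
  refine (qf_deriv k l y).unique ?_
  have h : HasDerivAt (fun y => ∑ j ∈ Finset.range (k + 2 + 1), cf (k + 2) j * Real.exp (-(j * l * y)))
      (∑ j ∈ Finset.range (k + 2 + 1), cf (k + 2) j * -(j * l * Real.exp (-(j * l * y)))) y :=
    HasDerivAt.fun_sum fun j _ => (E_deriv (j * l) y).const_mul _
  refine h.congr_of_eventuallyEq ?_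
  exact Eventually.of_forall fun y => qf_sum _ l y

lemma qf2_sum (k : ℕ) (l y : ℝ) :
    qf2 k l y = ∑ j ∈ Finset.range (k + 2 + 1), cf (k + 2) j * ((j * l) ^ 2 * Real.exp (-(j * l * y))) := by
  refine (qf1_deriv k l y).unique ?_
  have h : HasDerivAt (fun y => ∑ j ∈ Finset.range (k + 2 + 1), cf (k + 2) j * -(j * l * Real.exp (-(j * l * y))))
      (∑ j ∈ Finset.range (k + 2 + 1), cf (k + 2) j * -(j * l * -(j * l * Real.exp (-(j * l * y))))) y :=
    HasDerivAt.fun_sum fun j _ => (((E_deriv (j * l) y).const_mul (j * l)).fun_neg).const_mul _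
  refine (h.congr_of_eventuallyEq ?_).congr_deriv ?_
  · exact Eventually.of_forall fun y => qf1_sum _ l y
  · refine Finset.sum_congr rfl fun j _ => by ring

/-- jump part of the generator -/
def jmp (k : ℕ) (l y z : ℝ) : ℝ :=
  qf (k + 2) l (y + z) - qf (k + 2) l y - (if z ≤ 1 then z * qf1 k l y else 0)

lemma jmp_sum (k : ℕ) (l y z : ℝ) :
    jmp k l y z = ∑ j ∈ Finset.range (k + 2 + 1),
      cf (k + 2) j * Real.exp (-(j * l * y)) * kerB z (j * l) := by
  have h : ∀ j : ℕ, cf (k + 2) j * Real.exp (-(j * l * y)) * kerB z (j * l)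
      = cf (k + 2) j * Real.exp (-(j * l * (y + z))) - cf (k + 2) j * Real.exp (-(j * l * y))
      - (if z ≤ 1 then z else 0) * (cf (k + 2) j * -(j * l * Real.exp (-(j * l * y)))) := by
    intro j
    have e : Real.exp (-(j * l * (y + z))) = Real.exp (-(j * l * y)) * Real.exp (-(z * (j * l))) := by
      rw [← Real.exp_add]; congr 1; ring
    rw [e]; unfold kerB
    split_ifs <;> ring
  simp_rw [h]
  rw [Finset.sum_sub_distrib, Finset.sum_sub_distrib, ← Finset.mul_sum, ← qf_sum, ← qf_sum, ← qf1_sum]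
  unfold jmp
  split_ifs <;> ring

section gen
variable {φ : ℝ → ℝ} {β σ : ℝ} {m : Measure ℝ}

lemma jmp_int (hφ : IsBranchingMechanism φ β σ m) (k : ℕ) {l : ℝ} (hl : 0 ≤ l) (y : ℝ) :
    Integrable (fun z => jmp k l y z) m := by
  simp_rw [jmp_sum]
  exact integrable_finsetSum _ fun j _ => (hφ.int_ker (by positivity)).const_mul _

lemma genq_eq (hφ : IsBranchingMechanism φ β σ m) (k : ℕ) {l : ℝ} (hl : 0 ≤ l) (y : ℝ) :
    genq φ (k + 2) l y = -β * (y * qf1 k l y) + σ ^ 2 / 2 * (y * qf2 k l y)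
      + ∫ z, y * jmp k l y z ∂m := by
  rw [integral_const_mul]
  simp_rw [jmp_sum]
  rw [integral_finsetSum _ fun j _ => (hφ.int_ker (by positivity)).const_mul _]
  simp_rw [integral_const_mul]
  rw [qf1_sum, qf2_sum]
  unfold genq
  simp_rw [Finset.mul_sum]
  rw [← Finset.sum_add_distrib, ← Finset.sum_add_distrib]
  refine Finset.sum_congr rfl fun j _ => ?_
  rw [hφ.form' (by positivity)]
  ring

end gen

/-! pointwise bounds -/

lemma A_nonneg {l y : ℝ} (hl : 0 ≤ l) (hy : 0 ≤ y) : 0 ≤ 1 - Real.exp (-(l * y)) := by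
  have : Real.exp (-(l * y)) ≤ 1 := Real.exp_le_one_iff.2 (by nlinarith)
  linarith

lemma A_le_one {l y : ℝ} : 1 - Real.exp (-(l * y)) ≤ 1 := by
  have := Real.exp_pos (-(l * y))
  linarith

lemma A_le {l y : ℝ} : 1 - Real.exp (-(l * y)) ≤ l * y := by
  have := Real.add_one_le_exp (-(l * y))
  linarith

lemma qf_nonneg {n : ℕ} {l y : ℝ} (hl : 0 ≤ l) (hy : 0 ≤ y) : 0 ≤ qf n l y :=
  pow_nonneg (A_nonneg hl hy) n

lemma qf_le_one {n : ℕ} {l y : ℝ} (hl : 0 ≤ l) (hy : 0 ≤ y) : qf n l y ≤ 1 :=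
  pow_le_one₀ (A_nonneg hl hy) A_le_one

lemma qf1_bound (k : ℕ) {l y : ℝ} (hl : 0 ≤ l) (hy : 0 ≤ y) :
    0 ≤ y * qf1 k l y ∧ y * qf1 k l y ≤ (k + 2) * qf (k + 2) l y := by
  have hA := A_nonneg hl hy
  have h := mul_exp_le (l := l) (y := y)
  have he := Real.exp_pos (-(l * y))
  unfold qf1 qf
  constructor
  · positivity
  · calc _ = (k + 2 : ℝ) * ((1 - Real.exp (-(l * y))) ^ (k + 1) * (l * y * Real.exp (-(l * y)))) := by ring
      _ ≤ (k + 2 : ℝ) * ((1 - Real.exp (-(l * y))) ^ (k + 1) * (1 - Real.exp (-(l * y)))) := by gcongr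
      _ = _ := by ring

lemma lam_pow_aux {a l : ℝ} (ha : 0 ≤ a) (hl : 0 ≤ l) (k : ℕ) :
    l * a ^ (k + 1) ≤ l ^ (k + 2) + a ^ (k + 2) := by
  rcases le_total l a with h | h
  · calc l * a ^ (k + 1) ≤ a * a ^ (k + 1) := by gcongr
      _ = a ^ (k + 2) := by ring
      _ ≤ _ := by have : 0 ≤ l ^ (k + 2) := by positivity
                  linarith
  · calc l * a ^ (k + 1) ≤ l * l ^ (k + 1) := by gcongr
      _ = l ^ (k + 2) := by ring
      _ ≤ _ := by have : 0 ≤ a ^ (k + 2) := by positivity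
                  linarith

lemma qf2_bound (k : ℕ) {l y : ℝ} (hl : 0 ≤ l) (hy : 0 ≤ y) :
    |y * qf2 k l y| ≤ (k + 2) ^ 2 * (l ^ (k + 2) + qf (k + 2) l y) := by
  have hA := A_nonneg hl hy
  have hA1 := A_le_one (l := l) (y := y)
  have h := mul_exp_le (l := l) (y := y)
  have he := Real.exp_pos (-(l * y))
  have h3 := lam_pow_aux hA hl k
  unfold qf2 qf
  set A := 1 - Real.exp (-(l * y)) with hAdef
  set e := Real.exp (-(l * y)) with hedef
  have he1 : e ≤ 1 := by linarith
  have b1 : 0 ≤ y * l ^ 2 * (A ^ k * e ^ 2) ∧ y * l ^ 2 * (A ^ k * e ^ 2) ≤ l * A ^ (k + 1) := by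
    refine ⟨by positivity, ?_⟩
    calc y * l ^ 2 * (A ^ k * e ^ 2) = l * A ^ k * (l * y * e) * e := by ring
      _ ≤ l * A ^ k * A * 1 := by gcongr
      _ = _ := by ring
  have b2 : 0 ≤ y * l ^ 2 * (A ^ (k + 1) * e) ∧ y * l ^ 2 * (A ^ (k + 1) * e) ≤ l * A ^ (k + 1) := by
    refine ⟨by positivity, ?_⟩
    calc y * l ^ 2 * (A ^ (k + 1) * e) = l * A ^ (k + 1) * (l * y * e) := by ring
      _ ≤ l * A ^ (k + 1) * 1 := by gcongr; linarith
      _ = _ := by ring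
  have e1 : y * ((k + 2 : ℝ) * l ^ 2 * ((k + 1 : ℝ) * A ^ k * e ^ 2 - A ^ (k + 1) * e))
      = (k + 2 : ℝ) * ((k + 1) * (y * l ^ 2 * (A ^ k * e ^ 2)) - y * l ^ 2 * (A ^ (k + 1) * e)) := by ring
  have hX : 0 ≤ l * A ^ (k + 1) := by positivity
  have e2 : |(k + 1) * (y * l ^ 2 * (A ^ k * e ^ 2)) - y * l ^ 2 * (A ^ (k + 1) * e)|
      ≤ (k + 2) * (l * A ^ (k + 1)) := by
    have hk : (0:ℝ) ≤ k := by positivity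
    rw [abs_le]
    constructor <;> nlinarith [mul_le_mul_of_nonneg_left b1.2 hk, mul_nonneg hk b1.1, mul_nonneg hk hX]
  rw [e1, abs_mul, abs_of_nonneg (by positivity)]
  calc _ ≤ (k + 2 : ℝ) * ((k + 2) * (l * A ^ (k + 1))) := by gcongr
    _ = (k + 2 : ℝ) ^ 2 * (l * A ^ (k + 1)) := by ring
    _ ≤ _ := by gcongr

lemma qf_shift (n : ℕ) {l y ξ : ℝ} (hl : 0 ≤ l) (hy : 0 ≤ y) (h1 : y ≤ ξ) (h2 : ξ ≤ y + 1) :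
    qf n l ξ ≤ 2 ^ n * (l ^ n + qf n l y) := by
  have hA := A_nonneg hl hy
  have hA' := A_nonneg hl (hy.trans h1)
  unfold qf
  have h3 : 1 - Real.exp (-(l * ξ)) ≤ l + (1 - Real.exp (-(l * y))) := by
    obtain ⟨h4, h5⟩ := exp_neg_lip (a := l * y) (b := l * ξ) (by gcongr)
    have : Real.exp (-(l * y)) ≤ 1 := by linarith
    have h6 : (l * ξ - l * y) ≤ l := by nlinarith
    have h7 : (l * ξ - l * y) * Real.exp (-(l * y)) ≤ l * ξ - l * y := by
      apply mul_le_of_le_one_right _ this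
      nlinarith
    linarith
  calc _ ≤ (l + (1 - Real.exp (-(l * y)))) ^ n := by gcongr
    _ ≤ 2 ^ (n - 1) * (l ^ n + (1 - Real.exp (-(l * y))) ^ n) := add_pow_le hl hA n
    _ ≤ _ := by
      gcongr
      · norm_num
      · omega

lemma jmp_small (k : ℕ) {l y z : ℝ} (hl : 0 ≤ l) (hy : 0 ≤ y) (hz : 0 < z) (hz1 : z ≤ 1) :
    |y * jmp k l y z| ≤ (k + 2) ^ 2 * (1 + 2 ^ (k + 2)) * (l ^ (k + 2) + qf (k + 2) l y) * z ^ 2 := by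
  set M := (k + 2 : ℝ) ^ 2 * (1 + 2 ^ (k + 2)) * (l ^ (k + 2) + qf (k + 2) l y) with hM
  have hq := qf_nonneg (n := k + 2) hl hy
  have hM0 : 0 ≤ M := by positivity
  have hb2 : ∀ ξ ∈ Icc y (y + z), ‖y * qf2 k l ξ‖ ≤ M := by
    intro ξ hξ
    have hξ0 : 0 ≤ ξ := hy.trans hξ.1
    have h1 := qf2_bound k hl hξ0
    have h2 := qf_shift (k + 2) hl hy hξ.1 (by linarith [hξ.2])
    have h3 : ‖y * qf2 k l ξ‖ ≤ |ξ * qf2 k l ξ| := by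
      rw [Real.norm_eq_abs, abs_mul, abs_mul, abs_of_nonneg hy, abs_of_nonneg hξ0]
      gcongr; exact hξ.1
    refine h3.trans (h1.trans ?_)
    rw [hM, mul_assoc]
    gcongr
    linarith
  have hb1 : ∀ ξ ∈ Icc y (y + z), ‖y * (qf1 k l ξ - qf1 k l y)‖ ≤ M * z := by
    intro ξ hξ
    have := Convex.norm_image_sub_le_of_norm_hasDerivWithin_le (𝕜 := ℝ)
      (f := fun ξ => y * qf1 k l ξ) (f' := fun ξ => y * qf2 k l ξ) (s := Icc y (y + z)) (C := M)
      (x := y) (y := ξ) (fun s hs => ((qf1_deriv k l s).const_mul y).hasDerivWithinAt) hb2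
      (convex_Icc _ _) ⟨le_rfl, by linarith⟩ hξ
    rw [mul_sub]
    refine this.trans ?_
    gcongr
    rw [Real.norm_eq_abs, abs_of_nonneg (by linarith [hξ.1])]
    linarith [hξ.2]
  have := Convex.norm_image_sub_le_of_norm_hasDerivWithin_le (𝕜 := ℝ)
      (f := fun ξ => y * (qf (k + 2) l ξ - ξ * qf1 k l y))
      (f' := fun ξ => y * (qf1 k l ξ - 1 * qf1 k l y)) (s := Icc y (y + z)) (C := M * z)
      (x := y) (y := y + z)
      (fun s hs => (((qf_deriv k l s).sub ((hasDerivAt_id s).mul_const _)).const_mul y).hasDerivWithinAt)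
      (by simpa using hb1)
      (convex_Icc _ _) ⟨le_rfl, by linarith⟩ ⟨by linarith, le_rfl⟩
  rw [add_sub_cancel_left, Real.norm_eq_abs, Real.norm_eq_abs, abs_of_pos hz] at this
  unfold jmp
  rw [if_pos hz1]
  calc _ = |y * (qf (k + 2) l (y + z) - (y + z) * qf1 k l y) - y * (qf (k + 2) l y - y * qf1 k l y)| := by
        congr 1; ring
    _ ≤ _ := this
    _ = _ := by ring

lemma pow_add_sub_le (k : ℕ) {a b : ℝ} (ha : 0 ≤ a) (hb : 0 ≤ b) :
    (a + b) ^ (k + 2) - a ^ (k + 2) ≤ (k + 2) * b * (a + b) ^ (k + 1) := by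
  have h := Convex.norm_image_sub_le_of_norm_hasDerivWithin_le (𝕜 := ℝ)
      (f := fun ξ : ℝ => ξ ^ (k + 2)) (f' := fun ξ => ((k + 2 : ℕ) : ℝ) * ξ ^ (k + 1)) (s := Icc a (a + b))
      (C := (k + 2) * (a + b) ^ (k + 1))
      (x := a) (y := a + b)
      (fun s hs => (hasDerivAt_pow (k + 2) s).hasDerivWithinAt)
      (fun s hs => by
        have hs0 := ha.trans hs.1
        rw [Real.norm_eq_abs, abs_of_nonneg (by positivity)]
        push_cast
        gcongr
        exact hs.2)
      (convex_Icc _ _) ⟨le_rfl, by linarith⟩ ⟨by linarith, le_rfl⟩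
  rw [add_sub_cancel_left, Real.norm_eq_abs, Real.norm_eq_abs, abs_of_nonneg hb] at h
  have := le_abs_self ((a + b) ^ (k + 2) - a ^ (k + 2))
  linarith

lemma A_add (l y z : ℝ) : 1 - Real.exp (-(l * (y + z))) =
    (1 - Real.exp (-(l * y))) + (1 - Real.exp (-(l * z))) * Real.exp (-(l * y)) := by
  have : Real.exp (-(l * (y + z))) = Real.exp (-(l * y)) * Real.exp (-(l * z)) := by
    rw [← Real.exp_add]; congr 1; ring
  rw [this]; ring

lemma jmp_large_upper (k : ℕ) {l y z : ℝ} (hl : 0 ≤ l) (hy : 0 ≤ y) (hz : 1 < z) :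
    y * jmp k l y z ≤ (k + 2) * 2 ^ (k + 2) *
      (z * qf (k + 2) l y + y * Real.exp (-(l * y)) * qf (k + 2) l z) := by
  have hz0 : 0 ≤ z := by linarith
  have hA := A_nonneg hl hy
  have hB := A_nonneg hl hz0
  have hBz := A_le (l := l) (y := z)
  have h := mul_exp_le (l := l) (y := y)
  have he := Real.exp_pos (-(l * y))
  have hadd := A_add l y z
  unfold jmp qf
  rw [if_neg (not_le.2 hz), sub_zero, hadd]
  set A := 1 - Real.exp (-(l * y)) with hAdef
  set B := 1 - Real.exp (-(l * z)) with hBdef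
  set e := Real.exp (-(l * y)) with hedef
  have he1 : e ≤ 1 := by linarith
  have hBe : 0 ≤ B * e := by positivity
  have h1 := pow_add_sub_le k hA hBe
  have h2 : (A + B * e) ^ (k + 1) ≤ 2 ^ (k + 2) * (A ^ (k + 1) + B ^ (k + 1)) := by
    calc _ ≤ (A + B) ^ (k + 1) := by gcongr; nlinarith
      _ ≤ 2 ^ (k + 1 - 1) * (A ^ (k + 1) + B ^ (k + 1)) := add_pow_le hA hB _
      _ ≤ _ := by
        gcongr
        · norm_num
        · omega
  have h3 : y * e * B ≤ z * A := by
    have : y * e * B ≤ y * e * (l * z) := by gcongr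
    have : z * (l * y * e) ≤ z * A := by gcongr
    linarith
  calc y * ((A + B * e) ^ (k + 2) - A ^ (k + 2)) ≤ y * ((k + 2) * (B * e) * (A + B * e) ^ (k + 1)) := by
        gcongr
    _ ≤ y * ((k + 2) * (B * e) * (2 ^ (k + 2) * (A ^ (k + 1) + B ^ (k + 1)))) := by gcongr
    _ = (k + 2) * 2 ^ (k + 2) * ((y * e * B) * A ^ (k + 1) + y * e * B ^ (k + 2)) := by ring
    _ ≤ (k + 2) * 2 ^ (k + 2) * ((z * A) * A ^ (k + 1) + y * e * B ^ (k + 2)) := by gcongr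
    _ = _ := by ring

lemma jmp_large_lower (k : ℕ) {l y z : ℝ} (hl : 0 ≤ l) (hy : 0 ≤ y) (hz : 1 < z) :
    y * Real.exp (-((k + 2 : ℕ) * l * y)) * qf (k + 2) l z ≤ y * jmp k l y z := by
  have hz0 : 0 ≤ z := by linarith
  have hA := A_nonneg hl hy
  have hB := A_nonneg hl hz0
  have he := Real.exp_pos (-(l * y))
  have hadd := A_add l y z
  have hexp : Real.exp (-((k + 2 : ℕ) * l * y)) = Real.exp (-(l * y)) ^ (k + 2) := by
    rw [← Real.exp_nat_mul]; congr 1; ring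
  unfold jmp qf
  rw [if_neg (not_le.2 hz), sub_zero, hadd, hexp, mul_assoc]
  gcongr
  rw [← mul_pow]
  have := pow_add_pow_le hA (mul_nonneg hB he.le) (n := k + 2) (by omega)
  rw [mul_comm (Real.exp (-(l * y)))]
  linarith


section moment
variable {φ : ℝ → ℝ} {β σ : ℝ} {m : Measure ℝ} {v : ℝ → ℝ → ℝ} {Q : ℝ → ℝ → Measure ℝ}

/-- truncated moment of the Lévy measure -/
def Mq (m : Measure ℝ) (n : ℕ) (l : ℝ) : ℝ := ∫ z in Ioi 1, qf n l z ∂m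

lemma qf_meas (n : ℕ) (l : ℝ) : Measurable (qf n l) := by
  unfold qf; fun_prop

lemma qf_int_m (hφ : IsBranchingMechanism φ β σ m) (n : ℕ) {l : ℝ} (hl : 0 ≤ l) :
    IntegrableOn (qf n l) (Ioi 1) m := by
  have hfin : IntegrableOn (fun _ : ℝ => (1:ℝ)) (Ioi 1) m := by
    simp [hφ.meas_Ioi]
  refine Integrable.mono' hfin (qf_meas n l).aestronglyMeasurable ?_
  rw [ae_restrict_iff' measurableSet_Ioi]
  refine ae_of_all _ fun z hz => ?_
  have hz : (0:ℝ) ≤ z := zero_le_one.trans (le_of_lt hz)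
  rw [Real.norm_eq_abs, abs_of_nonneg (qf_nonneg hl hz)]
  exact qf_le_one hl hz

lemma Mq_nonneg (n : ℕ) {l : ℝ} (hl : 0 ≤ l) : 0 ≤ Mq m n l :=
  setIntegral_nonneg measurableSet_Ioi fun z hz => qf_nonneg hl (zero_le_one.trans (le_of_lt hz))

lemma gen_base (hφ : IsBranchingMechanism φ β σ m) (k : ℕ) {l y : ℝ} (hl : 0 ≤ l) (hy : 0 ≤ y) :
    |-β * (y * qf1 k l y) + σ ^ 2 / 2 * (y * qf2 k l y)| ≤
      (|β| * (k + 2) + σ ^ 2 / 2 * (k + 2) ^ 2) * (l ^ (k + 2) + qf (k + 2) l y) := by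
  obtain ⟨h1, h2⟩ := qf1_bound k hl hy
  have h3 := qf2_bound k hl hy
  have hlp : 0 ≤ l ^ (k + 2) := by positivity
  calc _ ≤ |-β * (y * qf1 k l y)| + |σ ^ 2 / 2 * (y * qf2 k l y)| := abs_add_le _ _
    _ = |β| * (y * qf1 k l y) + σ ^ 2 / 2 * |y * qf2 k l y| := by
      rw [abs_mul (-β), abs_mul (σ ^ 2 / 2), abs_neg, abs_of_nonneg h1,
        abs_of_nonneg (by positivity : 0 ≤ σ ^ 2 / 2)]
    _ ≤ |β| * ((k + 2) * (l ^ (k + 2) + qf (k + 2) l y))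
        + σ ^ 2 / 2 * ((k + 2) ^ 2 * (l ^ (k + 2) + qf (k + 2) l y)) := by
      have h4 : y * qf1 k l y ≤ (k + 2) * (l ^ (k + 2) + qf (k + 2) l y) := by
        refine h2.trans (mul_le_mul_of_nonneg_left (by linarith) (by positivity))
      exact add_le_add (mul_le_mul_of_nonneg_left h4 (abs_nonneg _))
        (mul_le_mul_of_nonneg_left h3 (by positivity))
    _ = _ := by ring

lemma gen_lower (hφ : IsBranchingMechanism φ β σ m) (k : ℕ) :
    ∃ C : ℝ, 0 ≤ C ∧ ∀ l, 0 ≤ l → ∀ y, 0 ≤ y →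
      -(C * (l ^ (k + 2) + qf (k + 2) l y)) +
        y * Real.exp (-((k + 2 : ℕ) * l * y)) * Mq m (k + 2) l ≤ genq φ (k + 2) l y := by
  have hI : 0 ≤ ∫ z : ℝ, min 1 (z ^ 2) ∂m := integral_nonneg fun z => by positivity
  set C4 : ℝ := (k + 2) ^ 2 * (1 + 2 ^ (k + 2)) with hC4
  refine ⟨(|β| * (k + 2) + σ ^ 2 / 2 * (k + 2) ^ 2) + C4 * ∫ z : ℝ, min 1 (z ^ 2) ∂m, by positivity, ?_⟩
  intro l hl y hy
  have hb := (abs_le.1 (gen_base hφ k hl hy)).1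
  have hq := qf_nonneg (n := k + 2) hl hy
  rw [genq_eq hφ k hl]
  have key : ∫ z, (-(C4 * (l ^ (k + 2) + qf (k + 2) l y) * min 1 (z ^ 2)) +
      y * Real.exp (-((k + 2 : ℕ) * l * y)) * (Ioi (1:ℝ)).indicator (qf (k + 2) l) z) ∂m
      ≤ ∫ z, y * jmp k l y z ∂m := by
    refine integral_mono_ae ?_ ((jmp_int hφ k hl y).const_mul y) ?_
    · exact ((hφ.int_min.const_mul _).neg).add
        (((integrable_indicator_iff measurableSet_Ioi).2 (qf_int_m hφ _ hl)).const_mul _)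
    · filter_upwards [hφ.ae_pos] with z hz
      have hp : 0 ≤ C4 * (l ^ (k + 2) + qf (k + 2) l y) * min 1 (z ^ 2) := by positivity
      by_cases h : z ≤ 1
      · rw [indicator_of_notMem (by simpa using h), mul_zero, add_zero, min_eq_right (by nlinarith)]
        exact (abs_le.1 (jmp_small k hl hy hz h)).1
      · rw [indicator_of_mem (by simpa using h)]
        have := jmp_large_lower k hl hy (not_le.1 h)
        linarith
  have j1 : Integrable (fun z : ℝ => -(C4 * (l ^ (k + 2) + qf (k + 2) l y) * min 1 (z ^ 2))) m :=
    (hφ.int_min.const_mul _).neg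
  have j2 : Integrable (fun z : ℝ => y * Real.exp (-((k + 2 : ℕ) * l * y)) *
      (Ioi (1:ℝ)).indicator (qf (k + 2) l) z) m :=
    (((integrable_indicator_iff measurableSet_Ioi).2 (qf_int_m hφ _ hl)).const_mul _)
  rw [integral_add j1 j2, integral_neg, integral_const_mul, integral_const_mul, integral_indicator measurableSet_Ioi] at key
  unfold Mq
  nlinarith

lemma gen_upper (hφ : IsBranchingMechanism φ β σ m) (h1m : IntegrableOn id (Ioi 1) m) (k : ℕ) :
    ∃ C : ℝ, 0 ≤ C ∧ ∀ l, 0 ≤ l → ∀ y, 0 ≤ y →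
      genq φ (k + 2) l y ≤ C * (l ^ (k + 2) + qf (k + 2) l y) +
        C * Mq m (k + 2) l * (y * Real.exp (-(l * y))) := by
  have hI : 0 ≤ ∫ z : ℝ, min 1 (z ^ 2) ∂m := integral_nonneg fun z => by positivity
  have h1m' : Integrable ((Ioi (1:ℝ)).indicator id) m := (integrable_indicator_iff measurableSet_Ioi).2 h1m
  have hind : ∀ z, 0 ≤ (Ioi (1:ℝ)).indicator id z := by
    intro z
    apply indicator_nonneg
    intro x hx; exact zero_le_one.trans (le_of_lt hx)
  have hI1 : 0 ≤ ∫ z, (Ioi (1:ℝ)).indicator id z ∂m := integral_nonneg hind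
  set C4 : ℝ := (k + 2) ^ 2 * (1 + 2 ^ (k + 2)) with hC4
  set C5 : ℝ := (k + 2) * 2 ^ (k + 2) with hC5
  refine ⟨((|β| * (k + 2) + σ ^ 2 / 2 * (k + 2) ^ 2) + C4 * (∫ z : ℝ, min 1 (z ^ 2) ∂m)
    + C5 * ∫ z, (Ioi (1:ℝ)).indicator id z ∂m) + C5, by positivity, ?_⟩
  intro l hl y hy
  have hb := (abs_le.1 (gen_base hφ k hl hy)).2
  have hq := qf_nonneg (n := k + 2) hl hy
  rw [genq_eq hφ k hl]
  have i1 := hφ.int_min.const_mul (C4 * (l ^ (k + 2) + qf (k + 2) l y))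
  have i2 := h1m'.const_mul (C5 * qf (k + 2) l y)
  have i3 := ((integrable_indicator_iff measurableSet_Ioi).2 (qf_int_m hφ (k + 2) hl)).const_mul
    (C5 * (y * Real.exp (-(l * y))))
  have key : ∫ z, y * jmp k l y z ∂m ≤ ∫ z, (C4 * (l ^ (k + 2) + qf (k + 2) l y) * min 1 (z ^ 2) +
      C5 * qf (k + 2) l y * (Ioi (1:ℝ)).indicator id z +
      C5 * (y * Real.exp (-(l * y))) * (Ioi (1:ℝ)).indicator (qf (k + 2) l) z) ∂m := by
    refine integral_mono_ae ((jmp_int hφ k hl y).const_mul y) ((i1.add i2).add i3) ?_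
    · filter_upwards [hφ.ae_pos] with z hz
      have hp : 0 ≤ C4 * (l ^ (k + 2) + qf (k + 2) l y) * min 1 (z ^ 2) := by positivity
      by_cases h : z ≤ 1
      · rw [indicator_of_notMem (by simpa using h), indicator_of_notMem (by simpa using h),
          mul_zero, add_zero, mul_zero, add_zero, min_eq_right (by nlinarith)]
        exact (abs_le.1 (jmp_small k hl hy hz h)).2
      · rw [indicator_of_mem (by simpa using h), indicator_of_mem (by simpa using h)]
        have := jmp_large_upper k hl hy (not_le.1 h)
        simp only [id]
        nlinarith
  have i12 : Integrable (fun z : ℝ => C4 * (l ^ (k + 2) + qf (k + 2) l y) * min 1 (z ^ 2) +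
      C5 * qf (k + 2) l y * (Ioi (1:ℝ)).indicator id z) m := i1.add i2
  rw [integral_add i12 i3, integral_add i1 i2,
      integral_const_mul, integral_const_mul, integral_const_mul,
      integral_const_mul (C5 * (y * Real.exp (-(l * y)))),
      integral_indicator (f := qf (k + 2) l) measurableSet_Ioi] at key
  have hM := Mq_nonneg (m := m) (k + 2) hl
  have he : 0 ≤ y * Real.exp (-(l * y)) := by positivity
  have hlp : 0 ≤ l ^ (k + 2) := by positivity
  change _ ≤ _ + C5 * (y * Real.exp (-(l * y))) * Mq m (k + 2) l at key
  set I := ∫ z : ℝ, min 1 (z ^ 2) ∂m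
  set I1 := ∫ z, (Ioi (1:ℝ)).indicator id z ∂m
  set D := (|β| * (k + 2) + σ ^ 2 / 2 * (k + 2) ^ 2)
  have hD : 0 ≤ D := by positivity
  set M := Mq m (k + 2) l
  set e := y * Real.exp (-(l * y))
  set q := qf (k + 2) l y
  have t1 : 0 ≤ (D + C4 * I + C5 * I1) * (M * e) := by positivity
  have t2 : 0 ≤ C5 * I1 * l ^ (k + 2) := by positivity
  have t3 : 0 ≤ C5 * (l ^ (k + 2) + q) := by positivity
  rw [integral_const_mul]
  linarith

/-! moments along the semigroup -/

lemma qf_int_Q (hQ : IsCBSemigroup v Q) (n : ℕ) {l s x : ℝ} (hl : 0 ≤ l) (hs : 0 ≤ s) (hx : 0 ≤ x) :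
    Integrable (qf n l) (Q s x) := by
  obtain ⟨hp, h0, -⟩ := hQ s x hs hx
  refine (integrable_const (1:ℝ)).mono' (qf_meas n l).aestronglyMeasurable ?_
  filter_upwards [ae_nonneg_of_Iio h0] with y hy
  rw [Real.norm_eq_abs, abs_of_nonneg (qf_nonneg hl hy)]
  exact qf_le_one hl hy

lemma qf_integral (hQ : IsCBSemigroup v Q) (n : ℕ) {l s x : ℝ} (hl : 0 ≤ l) (hs : 0 ≤ s) (hx : 0 ≤ x) :
    ∫ y, qf n l y ∂(Q s x) = ∑ j ∈ Finset.range (n + 1),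
      cf n j * ∫ y, Real.exp (-(j * l * y)) ∂(Q s x) := by
  obtain ⟨hp, h0, -⟩ := hQ s x hs hx
  simp_rw [qf_sum]
  rw [integral_finsetSum _ fun j _ => (int_exp_aux (ae_nonneg_of_Iio h0) (by positivity)).const_mul _]
  simp_rw [integral_const_mul]

lemma genq_int_aux (hφ : IsBranchingMechanism φ β σ m) (hQ : IsCBSemigroup v Q) {l s x : ℝ}
    (hl : 0 < l) (hs : 0 ≤ s) (hx : 0 ≤ x) (j : ℕ) :
    Integrable (fun y => φ (j * l) * (y * Real.exp (-(j * l * y)))) (Q s x) := by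
  obtain ⟨hp, h0, -⟩ := hQ s x hs hx
  rcases Nat.eq_zero_or_pos j with rfl | hj
  · simp [hφ.phi_zero]
  · exact (int_mul_exp_aux (ae_nonneg_of_Iio h0) (by positivity)).const_mul _

lemma genq_int (hφ : IsBranchingMechanism φ β σ m) (hQ : IsCBSemigroup v Q) (n : ℕ) {l s x : ℝ}
    (hl : 0 < l) (hs : 0 ≤ s) (hx : 0 ≤ x) : Integrable (genq φ n l) (Q s x) := by
  unfold genq
  exact integrable_finsetSum _ fun j _ => (genq_int_aux hφ hQ hl hs hx j).const_mul _

lemma qf_cont (hφ : IsBranchingMechanism φ β σ m) (hv : IsCumulant φ v) (hQ : IsCBSemigroup v Q)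
    (n : ℕ) {l x : ℝ} (T : ℝ) (hl : 0 ≤ l) (hx : 0 ≤ x) :
    ContinuousOn (fun s => ∫ y, qf n l y ∂(Q s x)) (Icc 0 T) := by
  have : ContinuousOn (fun s => ∑ j ∈ Finset.range (n + 1),
      cf n j * ∫ y, Real.exp (-(j * l * y)) ∂(Q s x)) (Icc 0 T) :=
    continuousOn_finsetSum _ fun j _ =>
      continuousOn_const.mul (cont_exp hφ hv hQ T hx (by positivity))
  exact this.congr fun s hs => qf_integral hQ n hl hs.1 hx

lemma qf_fwd (hφ : IsBranchingMechanism φ β σ m) (hv : IsCumulant φ v) (hQ : IsCBSemigroup v Q)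
    (n : ℕ) {l x t : ℝ} (ht : 0 < t) (hl : 0 < l) (hx : 0 ≤ x) :
    HasDerivAt (fun s => ∫ y, qf n l y ∂(Q s x)) (∫ y, genq φ n l y ∂(Q t x)) t := by
  have h : HasDerivAt (fun s => ∑ j ∈ Finset.range (n + 1),
      cf n j * ∫ y, Real.exp (-(j * l * y)) ∂(Q s x))
      (∑ j ∈ Finset.range (n + 1), cf n j * ∫ y, φ (j * l) * (y * Real.exp (-(j * l * y))) ∂(Q t x)) t :=
    HasDerivAt.fun_sum fun j _ => (fwd_exp hφ hv hQ ht hx (by positivity)).const_mul _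
  refine (h.congr_of_eventuallyEq ?_).congr_deriv ?_
  · filter_upwards [Ioi_mem_nhds ht] with s hs
    exact qf_integral hQ n hl.le (le_of_lt hs) hx
  · unfold genq
    rw [integral_finsetSum _ fun j _ => (genq_int_aux hφ hQ hl ht.le hx j).const_mul _]
    simp_rw [integral_const_mul (cf n _)]

lemma qf_zero (hv : IsCumulant φ v) (hQ : IsCBSemigroup v Q)
    (n : ℕ) {l x : ℝ} (hl : 0 ≤ l) (hx : 0 ≤ x) :
    ∫ y, qf n l y ∂(Q 0 x) = qf n l x := by
  rw [qf_integral hQ n hl le_rfl hx, qf_sum]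
  refine Finset.sum_congr rfl fun j _ => ?_
  rw [(hQ 0 x le_rfl hx).2.2 _ (by positivity), v_zero_left hv (by positivity), mul_comm x]

lemma moment_upper (hφ : IsBranchingMechanism φ β σ m) (hv : IsCumulant φ v) (hQ : IsCBSemigroup v Q)
    (h1m : IntegrableOn id (Ioi 1) m) (k : ℕ) {t : ℝ} (ht : 0 ≤ t) :
    ∃ C : ℝ, 0 ≤ C ∧ ∀ l, 0 < l → ∀ x, 0 ≤ x →
      ∫ y, qf (k + 2) l y ∂(Q t x) ≤ C * (qf (k + 2) l x + l ^ (k + 2) + x * Mq m (k + 2) l) := by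
  obtain ⟨C, hC, hgen⟩ := gen_upper hφ h1m k
  obtain ⟨A, hA, hAφ⟩ := hφ.phi_lower' h1m
  refine ⟨Real.exp (C * t) * (1 + C * t + C * Real.exp (A * t) * t), by positivity, fun l hl x hx => ?_⟩
  have hM := Mq_nonneg (m := m) (k + 2) hl.le
  have h := gron_up (h := fun s => ∫ y, qf (k + 2) l y ∂(Q s x))
    (h' := fun s => ∫ y, genq φ (k + 2) l y ∂(Q s x)) (T := t) (C := C)
    (D := C * l ^ (k + 2) + C * Mq m (k + 2) l * (x * Real.exp (A * t))) hC (by positivity)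
    (qf_cont hφ hv hQ (k + 2) t hl.le hx)
    (fun s hs => qf_fwd hφ hv hQ (k + 2) hs.1 hl hx) (fun s hs => by
      obtain ⟨hp, h0, -⟩ := hQ s x hs.1.le hx
      have hae := ae_nonneg_of_Iio h0
      have i0 := qf_int_Q hQ (k + 2) hl.le hs.1.le hx
      have i1 : Integrable (fun y => C * (l ^ (k + 2) + qf (k + 2) l y)) (Q s x) :=
        ((integrable_const _).add i0).const_mul C
      have i2 := (int_mul_exp_aux hae hl).const_mul (C * Mq m (k + 2) l)
      have h1 : ∫ y, genq φ (k + 2) l y ∂(Q s x) ≤ ∫ y, (C * (l ^ (k + 2) + qf (k + 2) l y) +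
          C * Mq m (k + 2) l * (y * Real.exp (-(l * y)))) ∂(Q s x) := by
        refine integral_mono_ae (genq_int hφ hQ (k + 2) hl hs.1.le hx) (i1.add i2) ?_
        filter_upwards [hae] with y hy
        exact hgen l hl.le y hy
      rw [integral_add i1 i2, integral_const_mul, integral_const_mul,
        integral_add (integrable_const _) i0] at h1
      simp only [integral_const, probReal_univ, one_smul] at h1
      have h2 := mean_exp_le hφ hv hQ hA hAφ hs.1.le hx hl
      have h3 : x * Real.exp (A * s) ≤ x * Real.exp (A * t) := by
        gcongr; exact hs.2.le
      have h4 : C * Mq m (k + 2) l * (∫ y, y * Real.exp (-(l * y)) ∂(Q s x)) ≤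
          C * Mq m (k + 2) l * (x * Real.exp (A * t)) := by
        gcongr; linarith
      linarith) t ⟨ht, le_rfl⟩
  simp only [qf_zero hv hQ (k + 2) hl.le hx] at h
  have hq := qf_nonneg (n := k + 2) hl.le hx
  have hlp : 0 ≤ l ^ (k + 2) := by positivity
  set q := qf (k + 2) l x
  set M := Mq m (k + 2) l
  set E := Real.exp (A * t)
  have hE : 0 ≤ E := by positivity
  have a1 : 0 ≤ C * t * (q + x * M) := by positivity
  have a2 : 0 ≤ C * E * t * (q + l ^ (k + 2)) := by positivity
  have a3 : 0 ≤ l ^ (k + 2) + x * M := by positivity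
  refine h.trans ((mul_le_mul_of_nonneg_left (a := Real.exp (C * t)) (?_ : _ ≤
    (1 + C * t + C * E * t) * (q + l ^ (k + 2) + x * M)) (by positivity)).trans_eq (by ring))
  linarith

lemma moment_lower (hφ : IsBranchingMechanism φ β σ m) (hv : IsCumulant φ v) (hQ : IsCBSemigroup v Q)
    (k : ℕ) {t x : ℝ} (ht : 0 < t) (hx : 0 < x) :
    ∃ C : ℝ, 0 ≤ C ∧ ∀ l, 0 < l → l ≤ 1 →
      Mq m (k + 2) l ≤ C * (∫ y, qf (k + 2) l y ∂(Q t x) + l ^ (k + 2)) := by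
  obtain ⟨C, hC, hgen⟩ := gen_lower hφ k
  obtain ⟨c, hc, hmean⟩ := mean_exp_ge hφ hv hQ (l := (k + 2 : ℕ)) ht.le hx (by positivity)
  refine ⟨Real.exp (C * t) * (1 + C * t) / (c * t), by positivity, fun l hl hl1 => ?_⟩
  have hM := Mq_nonneg (m := m) (k + 2) hl.le
  have h := gron_low (h := fun s => ∫ y, qf (k + 2) l y ∂(Q s x))
    (h' := fun s => ∫ y, genq φ (k + 2) l y ∂(Q s x)) (T := t) (C := C) (A := C * l ^ (k + 2))
    (B := c * Mq m (k + 2) l) hC (by positivity) (by positivity)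
    (qf_cont hφ hv hQ (k + 2) t hl.le hx.le)
    (fun s hs => qf_fwd hφ hv hQ (k + 2) hs.1 hl hx.le) (fun s hs => by
      obtain ⟨hp, h0, -⟩ := hQ s x hs.1.le hx.le
      have hae := ae_nonneg_of_Iio h0
      have i0 := qf_int_Q hQ (k + 2) hl.le hs.1.le hx.le
      have i1 : Integrable (fun y => -(C * (l ^ (k + 2) + qf (k + 2) l y))) (Q s x) :=
        (((integrable_const _).add i0).const_mul C).neg
      have i2 := (int_mul_exp_aux hae (l := (k + 2 : ℕ)) (by positivity)).mul_const (Mq m (k + 2) l)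
      have h1 : ∫ y, (-(C * (l ^ (k + 2) + qf (k + 2) l y)) +
          y * Real.exp (-((k + 2 : ℕ) * y)) * Mq m (k + 2) l) ∂(Q s x) ≤
          ∫ y, genq φ (k + 2) l y ∂(Q s x) := by
        refine integral_mono_ae (i1.add i2) (genq_int hφ hQ (k + 2) hl hs.1.le hx.le) ?_
        filter_upwards [hae] with y hy
        refine le_trans ?_ (hgen l hl.le y hy)
        gcongr
        exact mul_le_of_le_one_right (by positivity) hl1
      rw [integral_add i1 i2, integral_neg, integral_const_mul, integral_mul_const,
        integral_add (integrable_const _) i0] at h1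
      simp only [integral_const, probReal_univ, one_smul] at h1
      have h2 := mul_le_mul_of_nonneg_right (hmean s ⟨hs.1.le, hs.2.le⟩) hM
      linarith) t ⟨ht.le, le_rfl⟩
  simp only [qf_zero hv hQ (k + 2) hl.le hx.le] at h
  have hq := qf_nonneg (n := k + 2) hl.le hx.le
  have hlp : 0 ≤ l ^ (k + 2) := by positivity
  have hIpos : 0 ≤ ∫ y, qf (k + 2) l y ∂(Q t x) := by
    obtain ⟨hp, h0, -⟩ := hQ t x ht.le hx.le
    refine integral_nonneg_of_ae ?_
    filter_upwards [ae_nonneg_of_Iio h0] with y hy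
    exact qf_nonneg hl.le hy
  rw [div_mul_eq_mul_div, le_div_iff₀ (by positivity)]
  set I := ∫ y, qf (k + 2) l y ∂(Q t x)
  have h5 : Real.exp (C * t) * (I + C * l ^ (k + 2) * t) ≤
      Real.exp (C * t) * (1 + C * t) * (I + l ^ (k + 2)) := by
    have : 0 ≤ C * t * I := by positivity
    refine ((mul_le_mul_of_nonneg_left (a := Real.exp (C * t)) (?_ : _ ≤
      (1 + C * t) * (I + l ^ (k + 2))) (by positivity)).trans_eq (by ring))
    linarith
  linarith

end moment


section series
variable {φ : ℝ → ℝ} {β σ : ℝ} {m : Measure ℝ} {v : ℝ → ℝ → ℝ} {Q : ℝ → ℝ → Measure ℝ}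

/-- the regular functions to which the problem is reduced -/
structure Reg (g : ℝ → ℝ) (D : ℝ) : Prop where
  mono : Monotone g
  cont : Continuous g
  pos : ∀ x, 0 < g x
  one_le : 1 ≤ D
  dbl : ∀ x, 0 ≤ x → g (2 * x) ≤ D * g x

/-- weights -/
def wt (g : ℝ → ℝ) (i : ℕ) : ℝ := g (2 ^ (i + 1)) - g (2 ^ i)

/-- scales -/
def sc (i : ℕ) : ℝ := (2 ^ i)⁻¹

/-- the comparison series -/
def Ser (g : ℝ → ℝ) (n : ℕ) (x : ℝ) : ENNReal :=
  ∑' i, ENNReal.ofReal (wt g i) * ENNReal.ofReal (qf n (sc i) x)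

variable {g : ℝ → ℝ} {D : ℝ}

lemma sc_pos (i : ℕ) : 0 < sc i := by unfold sc; positivity

lemma sc_le (i : ℕ) : sc i ≤ 1 := by
  unfold sc
  exact inv_le_one_of_one_le₀ (one_le_pow₀ (by norm_num))

lemma Reg.wt_nonneg (h : Reg g D) (i : ℕ) : 0 ≤ wt g i := by
  unfold wt
  have : g (2 ^ i) ≤ g (2 ^ (i + 1)) := h.mono (pow_le_pow_right₀ (by norm_num) (by lia))
  linarith

lemma Reg.dbl_pow (h : Reg g D) (i : ℕ) {x : ℝ} (hx : 0 ≤ x) : g (2 ^ i * x) ≤ D ^ i * g x := by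
  induction i with
  | zero => simp
  | succ i ih =>
    have h1 := h.dbl (2 ^ i * x) (by positivity)
    have h2 : D * g (2 ^ i * x) ≤ D * (D ^ i * g x) :=
      mul_le_mul_of_nonneg_left ih (zero_le_one.trans h.one_le)
    calc g (2 ^ (i + 1) * x) = g (2 * (2 ^ i * x)) := by congr 1; ring
      _ ≤ _ := h1.trans h2
      _ = _ := by ring

lemma wt_sum (g : ℝ → ℝ) (N : ℕ) : ∑ i ∈ Finset.range N, wt g i = g (2 ^ N) - g 1 := by
  have := Finset.sum_range_sub (fun i => g (2 ^ i)) N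
  simpa [wt] using this

lemma geom_bound {k : ℕ} (h : Reg g D) (hD : D ≤ 2 ^ (k + 1)) (p : ℕ) :
    D ^ p * ((2 ^ p)⁻¹ : ℝ) ^ (k + 2) ≤ (1 / 2) ^ p := by
  have hD0 : 0 ≤ D := zero_le_one.trans h.one_le
  have h1 : ((2 ^ p)⁻¹ : ℝ) ^ (k + 2) = ((2 ^ (k + 2))⁻¹ : ℝ) ^ p := by
    rw [inv_pow, inv_pow, ← pow_mul, ← pow_mul, mul_comm]
  rw [h1, ← mul_pow]
  refine pow_le_pow_left₀ (by positivity) ?_ p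
  rw [← div_eq_mul_inv, div_le_iff₀ (by positivity)]
  calc D ≤ 2 ^ (k + 1) := hD
    _ = _ := by ring

lemma geom_half (N : ℕ) : ∑ p ∈ Finset.range N, (1 / 2 : ℝ) ^ p ≤ 2 := by
  have h := summable_geometric_two.sum_le_tsum (Finset.range N) (fun i _ => by positivity)
  rwa [tsum_geometric_two] at h

lemma tail_bound {k : ℕ} (h : Reg g D) (hD : D ≤ 2 ^ (k + 1)) (J p : ℕ) {u : ℝ} (hu : 0 ≤ u)
    (hu2 : u ≤ 2 * 2 ^ J) :
    wt g (J + p) * (sc (J + p) * u) ^ (k + 2) ≤ D * 2 ^ (k + 2) * g (2 ^ J) * (1 / 2) ^ p := by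
  have hD0 : 0 ≤ D := zero_le_one.trans h.one_le
  have h1 : wt g (J + p) ≤ D ^ (p + 1) * g (2 ^ J) := by
    have := h.dbl_pow (p + 1) (x := 2 ^ J) (by positivity)
    have e : (2:ℝ) ^ (p + 1) * 2 ^ J = 2 ^ (J + p + 1) := by ring
    rw [e] at this
    have := h.pos (2 ^ (J + p))
    unfold wt
    linarith
  have h2 : sc (J + p) * u ≤ 2 * (2 ^ p)⁻¹ := by
    unfold sc
    rw [inv_mul_le_iff₀ (by positivity)]
    refine hu2.trans_eq ?_
    rw [pow_add]; field_simp
  have h3 : (sc (J + p) * u) ^ (k + 2) ≤ (2 * (2 ^ p)⁻¹) ^ (k + 2) :=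
    pow_le_pow_left₀ (mul_nonneg (sc_pos _).le hu) h2 _
  have hg := h.pos (2 ^ J)
  calc _ ≤ D ^ (p + 1) * g (2 ^ J) * (2 * (2 ^ p)⁻¹) ^ (k + 2) := by
        refine mul_le_mul h1 h3 (pow_nonneg (mul_nonneg (sc_pos _).le hu) _) (by positivity)
    _ = D * 2 ^ (k + 2) * g (2 ^ J) * (D ^ p * ((2 ^ p)⁻¹ : ℝ) ^ (k + 2)) := by
        rw [mul_pow]; ring
    _ ≤ _ := mul_le_mul_of_nonneg_left (geom_bound h hD p) (by positivity)

lemma qf_le_pow (n : ℕ) {l y : ℝ} (hl : 0 ≤ l) (hy : 0 ≤ y) : qf n l y ≤ (l * y) ^ n :=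
  pow_le_pow_left₀ (A_nonneg hl hy) A_le n

lemma ser_partial {k : ℕ} (h : Reg g D) (hD : D ≤ 2 ^ (k + 1)) (J N : ℕ) {x : ℝ} (hx : 0 ≤ x)
    (hx2 : x ≤ 2 * 2 ^ J) :
    ∑ i ∈ Finset.range N, wt g i * qf (k + 2) (sc i) x ≤ (1 + 2 * (D * 2 ^ (k + 2))) * g (2 ^ J) := by
  have hD0 : 0 ≤ D := zero_le_one.trans h.one_le
  have hnn : ∀ i, 0 ≤ wt g i * qf (k + 2) (sc i) x := fun i =>
    mul_nonneg (h.wt_nonneg i) (qf_nonneg (sc_pos i).le hx)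
  have h1 : ∑ i ∈ Finset.range N, wt g i * qf (k + 2) (sc i) x ≤
      ∑ i ∈ Finset.range (J + N), wt g i * qf (k + 2) (sc i) x :=
    Finset.sum_le_sum_of_subset_of_nonneg (Finset.range_mono (by lia)) fun i _ _ => hnn i
  refine h1.trans ?_
  rw [Finset.sum_range_add]
  have h2 : ∑ i ∈ Finset.range J, wt g i * qf (k + 2) (sc i) x ≤ g (2 ^ J) := by
    calc _ ≤ ∑ i ∈ Finset.range J, wt g i := Finset.sum_le_sum fun i _ =>
          mul_le_of_le_one_right (h.wt_nonneg i) (qf_le_one (sc_pos i).le hx)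
      _ = g (2 ^ J) - g 1 := wt_sum g J
      _ ≤ _ := by linarith [h.pos 1]
  have hg := h.pos (2 ^ J)
  have h3 : ∑ p ∈ Finset.range N, wt g (J + p) * qf (k + 2) (sc (J + p)) x ≤
      D * 2 ^ (k + 2) * g (2 ^ J) * 2 := by
    calc _ ≤ ∑ p ∈ Finset.range N, D * 2 ^ (k + 2) * g (2 ^ J) * (1 / 2) ^ p :=
          Finset.sum_le_sum fun p _ =>
            (mul_le_mul_of_nonneg_left (qf_le_pow _ (sc_pos _).le hx) (h.wt_nonneg _)).trans
              (tail_bound h hD J p hx hx2)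
      _ = D * 2 ^ (k + 2) * g (2 ^ J) * ∑ p ∈ Finset.range N, (1 / 2) ^ p := by rw [Finset.mul_sum]
      _ ≤ _ := mul_le_mul_of_nonneg_left (geom_half N) (by positivity)
  linarith

lemma ser_sum {k : ℕ} (h : Reg g D) (hD : D ≤ 2 ^ (k + 1)) :
    (∑' i, ENNReal.ofReal (wt g i) * ENNReal.ofReal (sc i ^ (k + 2))) ≠ ⊤ := by
  have hD0 : 0 ≤ D := zero_le_one.trans h.one_le
  have hg := h.pos 1
  refine ne_top_of_le_ne_top (b := ENNReal.ofReal (D * 2 ^ (k + 2) * g 1 * 2)) ENNReal.ofReal_ne_top ?_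
  refine ENNReal.tsum_le_of_sum_range_le fun N => ?_
  simp_rw [← ENNReal.ofReal_mul (h.wt_nonneg _)]
  rw [← ENNReal.ofReal_sum_of_nonneg fun i _ => mul_nonneg (h.wt_nonneg i) (pow_nonneg (sc_pos i).le _)]
  refine ENNReal.ofReal_le_ofReal ?_
  calc _ ≤ ∑ p ∈ Finset.range N, D * 2 ^ (k + 2) * g 1 * (1 / 2) ^ p :=
          Finset.sum_le_sum fun p _ => by
            have := tail_bound h hD 0 p (u := 1) (by norm_num) (by norm_num)
            simpa using this
      _ = D * 2 ^ (k + 2) * g 1 * ∑ p ∈ Finset.range N, (1 / 2) ^ p := by rw [Finset.mul_sum]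
      _ ≤ _ := mul_le_mul_of_nonneg_left (geom_half N) (by positivity)

lemma ser_le {k : ℕ} (h : Reg g D) (hD : D ≤ 2 ^ (k + 1)) :
    ∃ C : ENNReal, C ≠ ⊤ ∧ ∀ x, 0 ≤ x → Ser g (k + 2) x ≤ C * ENNReal.ofReal (g x) := by
  have hD0 : 0 ≤ D := zero_le_one.trans h.one_le
  have hg0 := h.pos 0
  have hg1 := h.pos 1
  have hE : 1 ≤ g 1 / g 0 := by
    rw [le_div_iff₀ hg0, one_mul]; exact h.mono zero_le_one
  refine ⟨ENNReal.ofReal ((1 + 2 * (D * 2 ^ (k + 2))) * (g 1 / g 0)), ENNReal.ofReal_ne_top,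
    fun x hx => ?_⟩
  rw [← ENNReal.ofReal_mul (by positivity)]
  refine ENNReal.tsum_le_of_sum_range_le fun N => ?_
  simp_rw [← ENNReal.ofReal_mul (h.wt_nonneg _)]
  rw [← ENNReal.ofReal_sum_of_nonneg fun i _ => mul_nonneg (h.wt_nonneg i) (qf_nonneg (sc_pos i).le hx)]
  refine ENNReal.ofReal_le_ofReal ?_
  obtain ⟨J, hJ1, hJ2⟩ : ∃ J : ℕ, x ≤ 2 * 2 ^ J ∧ g (2 ^ J) ≤ g 1 / g 0 * g x := by
    rcases lt_or_ge x 1 with h1 | h1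
    · refine ⟨0, by linarith, ?_⟩
      rw [pow_zero, div_mul_eq_mul_div, le_div_iff₀ hg0]
      exact mul_le_mul_of_nonneg_left (h.mono hx) hg1.le
    · obtain ⟨J, a, b⟩ := exists_nat_pow_near h1 (one_lt_two)
      refine ⟨J, by rw [pow_succ] at b; linarith, ?_⟩
      exact (h.mono a).trans (le_mul_of_one_le_left (h.pos x).le hE)
  refine (ser_partial h hD J N hx hJ1).trans ?_
  rw [mul_assoc]
  exact mul_le_mul_of_nonneg_left hJ2 (by positivity)

lemma le_ser (h : Reg g D) (n : ℕ) :
    ∃ C : ENNReal, C ≠ ⊤ ∧ ∀ x, 0 ≤ x → ENNReal.ofReal (g x) ≤ ENNReal.ofReal (g 1) + C * Ser g n x := by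
  have hθ : 0 < 1 - Real.exp (-1) := by
    have : Real.exp (-1) < 1 := by simp
    linarith
  set θ := (1 - Real.exp (-1)) ^ n with hθd
  have hθ0 : 0 < θ := by positivity
  refine ⟨ENNReal.ofReal θ⁻¹, ENNReal.ofReal_ne_top, fun x hx => ?_⟩
  rcases lt_or_ge x 1 with h1 | h1
  · exact (ENNReal.ofReal_le_ofReal (h.mono h1.le)).trans le_self_add
  · obtain ⟨J, a, b⟩ := exists_nat_pow_near h1 (one_lt_two)
    have hs : ENNReal.ofReal (∑ i ∈ Finset.range (J + 1), wt g i * qf n (sc i) x) ≤ Ser g n x := by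
      rw [ENNReal.ofReal_sum_of_nonneg fun i _ => mul_nonneg (h.wt_nonneg i) (qf_nonneg (sc_pos i).le hx)]
      simp_rw [ENNReal.ofReal_mul (h.wt_nonneg _)]
      exact ENNReal.sum_le_tsum _
    have hb : θ * (g x - g 1) ≤ ∑ i ∈ Finset.range (J + 1), wt g i * qf n (sc i) x := by
      calc θ * (g x - g 1) ≤ θ * (g (2 ^ (J + 1)) - g 1) :=
            mul_le_mul_of_nonneg_left (by linarith [h.mono b.le]) hθ0.le
        _ = ∑ i ∈ Finset.range (J + 1), wt g i * θ := by
            rw [← wt_sum, ← Finset.sum_mul, mul_comm]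
        _ ≤ _ := by
            refine Finset.sum_le_sum fun i hi => mul_le_mul_of_nonneg_left ?_ (h.wt_nonneg i)
            rw [hθd]
            unfold qf
            refine pow_le_pow_left₀ hθ.le ?_ n
            have hi : i ≤ J := by simpa [Nat.lt_succ_iff] using hi
            have : 1 ≤ sc i * x := by
              unfold sc
              rw [le_inv_mul_iff₀ (by positivity), mul_one]
              exact (pow_le_pow_right₀ (by norm_num) hi).trans a
            have : Real.exp (-(sc i * x)) ≤ Real.exp (-1) := Real.exp_le_exp.2 (by linarith)
            linarith
    set T := ∑ i ∈ Finset.range (J + 1), wt g i * qf n (sc i) x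
    have hc : g x ≤ g 1 + θ⁻¹ * T := by
      have : g x - g 1 ≤ θ⁻¹ * T := by
        rw [le_inv_mul_iff₀ hθ0]; exact hb
      linarith
    calc ENNReal.ofReal (g x) ≤ ENNReal.ofReal (g 1 + θ⁻¹ * T) := ENNReal.ofReal_le_ofReal hc
      _ ≤ ENNReal.ofReal (g 1) + ENNReal.ofReal (θ⁻¹ * T) := ENNReal.ofReal_add_le
      _ = ENNReal.ofReal (g 1) + ENNReal.ofReal θ⁻¹ * ENNReal.ofReal T := by
          rw [ENNReal.ofReal_mul (by positivity)]
      _ ≤ _ := by gcongr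

lemma ser_lint (g : ℝ → ℝ) (n : ℕ) (ν : Measure ℝ) :
    ∫⁻ x, Ser g n x ∂ν = ∑' i, ENNReal.ofReal (wt g i) * ∫⁻ x, ENNReal.ofReal (qf n (sc i) x) ∂ν := by
  unfold Ser
  rw [lintegral_tsum fun i => ((qf_meas n (sc i)).ennreal_ofReal.const_mul _).aemeasurable]
  simp_rw [lintegral_const_mul _ ((qf_meas n _).ennreal_ofReal)]

lemma ser_lint_Q (hQ : IsCBSemigroup v Q) (g : ℝ → ℝ) (n : ℕ) {t x : ℝ} (ht : 0 ≤ t) (hx : 0 ≤ x) :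
    ∫⁻ y, Ser g n y ∂(Q t x) =
      ∑' i, ENNReal.ofReal (wt g i) * ENNReal.ofReal (∫ y, qf n (sc i) y ∂(Q t x)) := by
  rw [ser_lint]
  refine tsum_congr fun i => ?_
  rw [ofReal_integral_eq_lintegral_ofReal (qf_int_Q hQ n (sc_pos i).le ht hx)]
  filter_upwards [ae_nonneg_of_Iio (hQ t x ht hx).2.1] with y hy
  exact qf_nonneg (sc_pos i).le hy

lemma ser_lint_m (hφ : IsBranchingMechanism φ β σ m) (g : ℝ → ℝ) (n : ℕ) :
    ∫⁻ z in Ioi 1, Ser g n z ∂m =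
      ∑' i, ENNReal.ofReal (wt g i) * ENNReal.ofReal (Mq m n (sc i)) := by
  rw [ser_lint]
  refine tsum_congr fun i => ?_
  unfold Mq
  rw [ofReal_integral_eq_lintegral_ofReal (qf_int_m hφ n (sc_pos i).le)]
  rw [EventuallyLE, ae_restrict_iff' measurableSet_Ioi]
  exact ae_of_all _ fun z hz => qf_nonneg (sc_pos i).le (zero_le_one.trans (le_of_lt hz))

end series


section assembly
variable {φ : ℝ → ℝ} {β σ : ℝ} {m : Measure ℝ} {v : ℝ → ℝ → ℝ} {Q : ℝ → ℝ → Measure ℝ}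
  {g : ℝ → ℝ} {D : ℝ}

lemma exists_k (D : ℝ) : ∃ k : ℕ, D ≤ 2 ^ (k + 1) := by
  obtain ⟨n, hn⟩ := pow_unbounded_of_one_lt D (one_lt_two : (1:ℝ) < 2)
  exact ⟨n, hn.le.trans (pow_le_pow_right₀ (by norm_num) (by lia))⟩

lemma Reg.meas (h : Reg g D) : Measurable fun x => ENNReal.ofReal (g x) :=
  h.cont.measurable.ennreal_ofReal

/-- sufficiency -/
lemma reg_back (h : Reg g D) {a : ℝ} (ha : 0 < a) (hag : ∀ x, 0 ≤ x → a * x ≤ g x)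
    (hφ : IsBranchingMechanism φ β σ m) (hv : IsCumulant φ v) (hQ : IsCBSemigroup v Q)
    {μ : Measure ℝ} [IsProbabilityMeasure μ] (hμ0 : μ (Iio 0) = 0) {t : ℝ} (ht : 0 ≤ t)
    (h1 : ∫⁻ x, ENNReal.ofReal (g x) ∂μ < ⊤) (h2 : ∫⁻ z in Ioi 1, ENNReal.ofReal (g z) ∂m < ⊤) :
    ∫⁻ x, (∫⁻ y, ENNReal.ofReal (g y) ∂(Q t x)) ∂μ < ⊤ := by
  obtain ⟨k, hk⟩ := exists_k D
  have hxg : ∀ x, 0 ≤ x → ENNReal.ofReal x ≤ ENNReal.ofReal a⁻¹ * ENNReal.ofReal (g x) := by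
    intro x hx
    rw [← ENNReal.ofReal_mul (by positivity)]
    refine ENNReal.ofReal_le_ofReal ?_
    rw [le_inv_mul_iff₀ ha]
    exact hag x hx
  have h1m : IntegrableOn id (Ioi 1) m := by
    refine ⟨measurable_id.aestronglyMeasurable, ?_⟩
    rw [hasFiniteIntegral_iff_ofReal]
    · calc ∫⁻ z in Ioi 1, ENNReal.ofReal (id z) ∂m
          ≤ ∫⁻ z in Ioi 1, ENNReal.ofReal a⁻¹ * ENNReal.ofReal (g z) ∂m :=
            setLIntegral_mono' measurableSet_Ioi fun z hz => hxg z (zero_le_one.trans (le_of_lt hz))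
        _ = ENNReal.ofReal a⁻¹ * ∫⁻ z in Ioi 1, ENNReal.ofReal (g z) ∂m :=
            lintegral_const_mul _ h.meas
        _ < ⊤ := ENNReal.mul_lt_top ENNReal.ofReal_lt_top h2
    · rw [EventuallyLE, ae_restrict_iff' measurableSet_Ioi]
      exact ae_of_all _ fun z hz => zero_le_one.trans (le_of_lt hz)
  obtain ⟨C, hC, hup⟩ := moment_upper hφ hv hQ h1m k ht
  obtain ⟨C1, hC1, hser⟩ := ser_le h hk
  obtain ⟨C2, hC2, hle⟩ := le_ser h (k + 2)
  have hS := ser_sum h hk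
  set S := ∑' i, ENNReal.ofReal (wt g i) * ENNReal.ofReal (sc i ^ (k + 2)) with hSd
  have hM : ∫⁻ z in Ioi 1, Ser g (k + 2) z ∂m ≠ ⊤ := by
    refine ne_top_of_le_ne_top (ENNReal.mul_lt_top hC1.lt_top h2).ne ?_
    rw [← lintegral_const_mul _ h.meas]
    exact setLIntegral_mono' measurableSet_Ioi fun z hz => hser z (zero_le_one.trans (le_of_lt hz))
  rw [ser_lint_m hφ] at hM
  set SM := ∑' i, ENNReal.ofReal (wt g i) * ENNReal.ofReal (Mq m (k + 2) (sc i)) with hSM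
  have key : ∀ x, 0 ≤ x → ∫⁻ y, ENNReal.ofReal (g y) ∂(Q t x) ≤
      (ENNReal.ofReal (g 1) + C2 * (ENNReal.ofReal C * S)) +
      (C2 * (ENNReal.ofReal C * (C1 + ENNReal.ofReal a⁻¹ * SM))) * ENNReal.ofReal (g x) := by
    intro x hx
    obtain ⟨hp, h0, -⟩ := hQ t x ht hx
    have hs : ∫⁻ y, Ser g (k + 2) y ∂(Q t x) ≤
        ENNReal.ofReal C * (Ser g (k + 2) x + S + ENNReal.ofReal x * SM) := by
      rw [ser_lint_Q hQ g (k + 2) ht hx]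
      unfold Ser
      rw [hSd, hSM, ← ENNReal.tsum_mul_left, ← ENNReal.tsum_add, ← ENNReal.tsum_add,
        ← ENNReal.tsum_mul_left]
      refine ENNReal.tsum_le_tsum fun i => ?_
      have hq := qf_nonneg (n := k + 2) (sc_pos i).le hx
      have hl := pow_nonneg (sc_pos i).le (k + 2)
      have hMn := Mq_nonneg (m := m) (k + 2) (sc_pos i).le
      have : ENNReal.ofReal (∫ y, qf (k + 2) (sc i) y ∂(Q t x)) ≤ ENNReal.ofReal C *
          (ENNReal.ofReal (qf (k + 2) (sc i) x) + ENNReal.ofReal (sc i ^ (k + 2))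
            + ENNReal.ofReal x * ENNReal.ofReal (Mq m (k + 2) (sc i))) := by
        rw [← ENNReal.ofReal_mul hx, ← ENNReal.ofReal_add hq hl, ← ENNReal.ofReal_add (by positivity)
          (by positivity), ← ENNReal.ofReal_mul hC]
        exact ENNReal.ofReal_le_ofReal (hup _ (sc_pos i) x hx)
      refine (mul_le_mul_right this _).trans_eq ?_
      ring
    calc ∫⁻ y, ENNReal.ofReal (g y) ∂(Q t x)
        ≤ ∫⁻ y, (ENNReal.ofReal (g 1) + C2 * Ser g (k + 2) y) ∂(Q t x) := by
          refine lintegral_mono_ae ?_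
          filter_upwards [ae_nonneg_of_Iio h0] with y hy
          exact hle y hy
      _ = ENNReal.ofReal (g 1) + C2 * ∫⁻ y, Ser g (k + 2) y ∂(Q t x) := by
          rw [lintegral_add_left measurable_const, lintegral_const_mul' _ _ hC2]
          simp
      _ ≤ ENNReal.ofReal (g 1) + C2 * (ENNReal.ofReal C * (C1 * ENNReal.ofReal (g x) + S +
            ENNReal.ofReal a⁻¹ * ENNReal.ofReal (g x) * SM)) := by
          gcongr
          refine hs.trans ?_
          gcongr
          · exact hser x hx
          · exact hxg x hx
      _ = _ := by ring
  set K0 := ENNReal.ofReal (g 1) + C2 * (ENNReal.ofReal C * S)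
  set K1 := C2 * (ENNReal.ofReal C * (C1 + ENNReal.ofReal a⁻¹ * SM))
  have hK0 : K0 < ⊤ := ENNReal.add_lt_top.2 ⟨ENNReal.ofReal_lt_top, ENNReal.mul_lt_top hC2.lt_top
    (ENNReal.mul_lt_top ENNReal.ofReal_lt_top hS.lt_top)⟩
  have hK1 : K1 < ⊤ := ENNReal.mul_lt_top hC2.lt_top (ENNReal.mul_lt_top ENNReal.ofReal_lt_top
    (ENNReal.add_lt_top.2 ⟨hC1.lt_top, ENNReal.mul_lt_top ENNReal.ofReal_lt_top hM.lt_top⟩))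
  calc _ ≤ ∫⁻ x, (K0 + K1 * ENNReal.ofReal (g x)) ∂μ := by
        refine lintegral_mono_ae ?_
        filter_upwards [ae_nonneg_of_Iio hμ0] with x hx
        exact key x hx
    _ = K0 + K1 * ∫⁻ x, ENNReal.ofReal (g x) ∂μ := by
        rw [lintegral_add_left measurable_const, lintegral_const_mul _ h.meas]
        simp
    _ < ⊤ := ENNReal.add_lt_top.2 ⟨hK0, ENNReal.mul_lt_top hK1 h1⟩

/-- necessity for the Lévy measure -/
lemma reg_levy (h : Reg g D)
    (hφ : IsBranchingMechanism φ β σ m) (hv : IsCumulant φ v) (hQ : IsCBSemigroup v Q)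
    {t x : ℝ} (ht : 0 < t) (hx : 0 < x) (h1 : ∫⁻ y, ENNReal.ofReal (g y) ∂(Q t x) < ⊤) :
    ∫⁻ z in Ioi 1, ENNReal.ofReal (g z) ∂m < ⊤ := by
  obtain ⟨k, hk⟩ := exists_k D
  obtain ⟨C, hC, hlow⟩ := moment_lower hφ hv hQ k ht hx
  obtain ⟨C1, hC1, hser⟩ := ser_le h hk
  obtain ⟨C2, hC2, hle⟩ := le_ser h (k + 2)
  have hS := ser_sum h hk
  obtain ⟨hp, h0, -⟩ := hQ t x ht.le hx.le
  have hSQ : ∫⁻ y, Ser g (k + 2) y ∂(Q t x) < ⊤ := by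
    refine lt_of_le_of_lt ?_ (ENNReal.mul_lt_top hC1.lt_top h1)
    rw [← lintegral_const_mul _ h.meas]
    refine lintegral_mono_ae ?_
    filter_upwards [ae_nonneg_of_Iio h0] with y hy
    exact hser y hy
  have hM : ∫⁻ z in Ioi 1, Ser g (k + 2) z ∂m < ⊤ := by
    refine lt_of_le_of_lt ?_ (ENNReal.mul_lt_top (ENNReal.ofReal_lt_top (r := C))
      (ENNReal.add_lt_top.2 ⟨hSQ, hS.lt_top⟩))
    rw [ser_lint_m hφ, ser_lint_Q hQ g (k + 2) ht.le hx.le, ← ENNReal.tsum_add, ← ENNReal.tsum_mul_left]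
    refine ENNReal.tsum_le_tsum fun i => ?_
    have hl := pow_nonneg (sc_pos i).le (k + 2)
    have hIpos : 0 ≤ ∫ y, qf (k + 2) (sc i) y ∂(Q t x) := by
      refine integral_nonneg_of_ae ?_
      filter_upwards [ae_nonneg_of_Iio h0] with y hy
      exact qf_nonneg (sc_pos i).le hy
    have : ENNReal.ofReal (Mq m (k + 2) (sc i)) ≤ ENNReal.ofReal C *
        (ENNReal.ofReal (∫ y, qf (k + 2) (sc i) y ∂(Q t x)) + ENNReal.ofReal (sc i ^ (k + 2))) := by
      rw [← ENNReal.ofReal_add hIpos hl, ← ENNReal.ofReal_mul hC]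
      exact ENNReal.ofReal_le_ofReal (hlow _ (sc_pos i) (sc_le i))
    refine (mul_le_mul_right this _).trans_eq ?_
    ring
  calc ∫⁻ z in Ioi 1, ENNReal.ofReal (g z) ∂m
      ≤ ∫⁻ z in Ioi 1, (ENNReal.ofReal (g 1) + C2 * Ser g (k + 2) z) ∂m :=
        setLIntegral_mono' measurableSet_Ioi fun z hz => hle z (zero_le_one.trans (le_of_lt hz))
    _ = ENNReal.ofReal (g 1) * m (Ioi 1) + C2 * ∫⁻ z in Ioi 1, Ser g (k + 2) z ∂m := by
        rw [lintegral_add_left measurable_const, lintegral_const_mul' _ _ hC2]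
        simp
    _ < ⊤ := ENNReal.add_lt_top.2 ⟨ENNReal.mul_lt_top ENNReal.ofReal_lt_top hφ.meas_Ioi,
        ENNReal.mul_lt_top hC2.lt_top hM⟩

/-- necessity for the initial law, pointwise form -/
lemma reg_start (h : Reg g D)
    (hφ : IsBranchingMechanism φ β σ m) (hv : IsCumulant φ v) (hQ : IsCBSemigroup v Q)
    {t : ℝ} (ht : 0 ≤ t) :
    ∃ K : ENNReal, K ≠ ⊤ ∧ ∀ x, 0 ≤ x →
      ENNReal.ofReal (g x) ≤ ENNReal.ofReal (g 1) + K * ∫⁻ y, ENNReal.ofReal (g y) ∂(Q t x) := by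
  obtain ⟨B, c, hc, hb⟩ := v_bounds hφ hv ht (zero_le_one : (0:ℝ) ≤ 1)
  obtain ⟨N, hN⟩ := pow_unbounded_of_one_lt (2 / c) (one_lt_two : (1:ℝ) < 2)
  have hD0 : 0 ≤ D := zero_le_one.trans h.one_le
  have hp : 0 < 1 - Real.exp (-(c / 2)) := by
    have : Real.exp (-(c / 2)) < 1 := by
      rw [← Real.exp_zero]; exact Real.exp_lt_exp.2 (by linarith)
    linarith
  set p := 1 - Real.exp (-(c / 2)) with hpd
  refine ⟨ENNReal.ofReal (D ^ N * p⁻¹), ENNReal.ofReal_ne_top, fun x hx => ?_⟩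
  rcases lt_or_ge x 1 with h1 | h1
  · exact (ENNReal.ofReal_le_ofReal (h.mono h1.le)).trans le_self_add
  have hx0 : 0 < x := by linarith
  refine le_trans ?_ le_add_self
  obtain ⟨hpr, h0, hlap⟩ := hQ t x ht hx
  have hv1 := (hb x⁻¹ ⟨by positivity, inv_le_one_of_one_le₀ h1⟩ t ⟨ht, le_rfl⟩).1
  have hi : ∫ y, Real.exp (-(x⁻¹ * y)) ∂(Q t x) ≤ Real.exp (-c) := by
    rw [hlap _ (by positivity)]
    refine Real.exp_le_exp.2 (neg_le_neg ?_)
    have := mul_le_mul_of_nonneg_left hv1 hx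
    rwa [mul_left_comm, mul_inv_cancel₀ hx0.ne', mul_one] at this
  have hmk := mul_meas_ge_le_integral_of_nonneg (μ := Q t x) (f := fun y => Real.exp (-(x⁻¹ * y)))
    (ae_of_all _ fun y => (Real.exp_pos _).le)
    (int_exp_aux (ae_nonneg_of_Iio h0) (by positivity)) (Real.exp (-(c / 2)))
  have hle : (Q t x).real (Iic (c / 2 * x)) ≤ Real.exp (-(c / 2)) := by
    have hset : {y | Real.exp (-(c / 2)) ≤ Real.exp (-(x⁻¹ * y))} = Iic (c / 2 * x) := by
      ext y
      simp only [mem_setOf_eq, Real.exp_le_exp, neg_le_neg_iff, mem_Iic]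
      rw [inv_mul_le_iff₀ hx0, mul_comm]
    rw [hset] at hmk
    have h2 := hmk.trans hi
    have e : Real.exp (-c) = Real.exp (-(c / 2)) * Real.exp (-(c / 2)) := by
      rw [← Real.exp_add]; congr 1; ring
    rw [e] at h2
    exact le_of_mul_le_mul_left h2 (Real.exp_pos _)
  have hge : ENNReal.ofReal p ≤ Q t x (Ioi (c / 2 * x)) := by
    rw [← compl_Iic, ENNReal.ofReal_le_iff_le_toReal (measure_ne_top _ _)]
    change p ≤ (Q t x).real _
    rw [probReal_compl_eq_one_sub measurableSet_Iic]
    linarith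
  have hgx : g x ≤ D ^ N * g (c / 2 * x) := by
    have e : x ≤ 2 ^ N * (c / 2 * x) := by
      have : 1 ≤ 2 ^ N * (c / 2) := by
        rw [div_lt_iff₀ hc] at hN; linarith
      nlinarith
    exact (h.mono e).trans (h.dbl_pow N (by positivity))
  have hI : ENNReal.ofReal (g (c / 2 * x)) * ENNReal.ofReal p ≤ ∫⁻ y, ENNReal.ofReal (g y) ∂(Q t x) := by
    calc _ ≤ ENNReal.ofReal (g (c / 2 * x)) * Q t x (Ioi (c / 2 * x)) := by gcongr
      _ = ∫⁻ y in Ioi (c / 2 * x), ENNReal.ofReal (g (c / 2 * x)) ∂(Q t x) := by simp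
      _ ≤ ∫⁻ y in Ioi (c / 2 * x), ENNReal.ofReal (g y) ∂(Q t x) :=
          setLIntegral_mono' measurableSet_Ioi fun y hy =>
            ENNReal.ofReal_le_ofReal (h.mono (le_of_lt hy))
      _ ≤ _ := setLIntegral_le_lintegral _ _
  have hgp := h.pos (c / 2 * x)
  calc ENNReal.ofReal (g x) ≤ ENNReal.ofReal (D ^ N * p⁻¹ * (g (c / 2 * x) * p)) := by
        refine ENNReal.ofReal_le_ofReal (hgx.trans_eq ?_)
        field_simp
    _ = ENNReal.ofReal (D ^ N * p⁻¹) * (ENNReal.ofReal (g (c / 2 * x)) * ENNReal.ofReal p) := by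
        rw [ENNReal.ofReal_mul (by positivity), ENNReal.ofReal_mul hgp.le]
    _ ≤ _ := by gcongr

lemma reg_main (h : Reg g D) {a : ℝ} (ha : 0 < a) (hag : ∀ x, 0 ≤ x → a * x ≤ g x)
    (hφ : IsBranchingMechanism φ β σ m) (hv : IsCumulant φ v) (hQ : IsCBSemigroup v Q)
    {μ : Measure ℝ} [IsProbabilityMeasure μ] (hμ0 : μ (Iio 0) = 0) (hμpos : 0 < μ (Ioi 0))
    {t : ℝ} (ht : 0 < t) :
    (∫⁻ x, (∫⁻ y, ENNReal.ofReal (g y) ∂(Q t x)) ∂μ) < ⊤ ↔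
      ((∫⁻ x, ENNReal.ofReal (g x) ∂μ) < ⊤ ∧
        (∫⁻ z in Ioi 1, ENNReal.ofReal (g z) ∂m) < ⊤) := by
  refine ⟨fun H => ⟨?_, ?_⟩, fun H => reg_back h ha hag hφ hv hQ hμ0 ht.le H.1 H.2⟩
  · obtain ⟨K, hK, hle⟩ := reg_start h hφ hv hQ ht.le
    calc ∫⁻ x, ENNReal.ofReal (g x) ∂μ
        ≤ ∫⁻ x, (ENNReal.ofReal (g 1) + K * ∫⁻ y, ENNReal.ofReal (g y) ∂(Q t x)) ∂μ := by
          refine lintegral_mono_ae ?_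
          filter_upwards [ae_nonneg_of_Iio hμ0] with x hx
          exact hle x hx
      _ = ENNReal.ofReal (g 1) + K * ∫⁻ x, (∫⁻ y, ENNReal.ofReal (g y) ∂(Q t x)) ∂μ := by
          rw [lintegral_add_left measurable_const, lintegral_const_mul' _ _ hK]
          simp
      _ < ⊤ := ENNReal.add_lt_top.2 ⟨ENNReal.ofReal_lt_top, ENNReal.mul_lt_top hK.lt_top H⟩
  · by_contra hcon
    have hall : ∀ x ∈ Ioi (0:ℝ), (⊤ : ENNReal) ≤ ∫⁻ y, ENNReal.ofReal (g y) ∂(Q t x) := by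
      intro x hx
      by_contra hlt
      exact hcon (reg_levy h hφ hv hQ ht hx (not_le.1 hlt))
    have : (⊤ : ENNReal) * μ (Ioi 0) ≤ ∫⁻ x, (∫⁻ y, ENNReal.ofReal (g y) ∂(Q t x)) ∂μ := by
      calc _ = ∫⁻ x in Ioi 0, (⊤ : ENNReal) ∂μ := by simp
        _ ≤ ∫⁻ x in Ioi 0, (∫⁻ y, ENNReal.ofReal (g y) ∂(Q t x)) ∂μ :=
            setLIntegral_mono' measurableSet_Ioi hall
        _ ≤ _ := setLIntegral_le_lintegral _ _
    rw [ENNReal.top_mul hμpos.ne'] at this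
    exact absurd H (not_lt.2 this)

end assembly


section reduction
variable {φ : ℝ → ℝ} {β σ : ℝ} {m : Measure ℝ} {v : ℝ → ℝ → ℝ} {Q : ℝ → ℝ → Measure ℝ}

lemma lint_cmp {f g : ℝ → ℝ} {C : ℝ} (hC : 0 ≤ C) (hfg : ∀ x, 0 ≤ x → f x ≤ C * g x)
    {ν : Measure ℝ} (hν : ∀ᵐ x ∂ν, 0 ≤ x) :
    ∫⁻ x, ENNReal.ofReal (f x) ∂ν ≤ ENNReal.ofReal C * ∫⁻ x, ENNReal.ofReal (g x) ∂ν := by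
  rw [← lintegral_const_mul' _ _ ENNReal.ofReal_ne_top]
  refine lintegral_mono_ae ?_
  filter_upwards [hν] with x hx
  rw [← ENNReal.ofReal_mul hC]
  exact ENNReal.ofReal_le_ofReal (hfg x hx)

lemma ae_Ioi_one (m : Measure ℝ) : ∀ᵐ x ∂(m.restrict (Ioi 1)), (0:ℝ) ≤ x := by
  rw [ae_restrict_iff' measurableSet_Ioi]
  exact ae_of_all _ fun z hz => zero_le_one.trans (le_of_lt hz)

lemma lint_cmp_fin {f g : ℝ → ℝ} {C : ℝ} (hC : 0 ≤ C) (hfg : ∀ x, 0 ≤ x → f x ≤ C * g x)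
    {ν : Measure ℝ} (hν : ∀ᵐ x ∂ν, 0 ≤ x) (h : ∫⁻ x, ENNReal.ofReal (g x) ∂ν < ⊤) :
    ∫⁻ x, ENNReal.ofReal (f x) ∂ν < ⊤ :=
  (lint_cmp hC hfg hν).trans_lt (ENNReal.mul_lt_top ENNReal.ofReal_lt_top h)

lemma lint_cmp_fin2 {f g : ℝ → ℝ} {C : ℝ} (hC : 0 ≤ C) (hfg : ∀ x, 0 ≤ x → f x ≤ C * g x)
    (hQ : IsCBSemigroup v Q) {μ : Measure ℝ} (hμ0 : μ (Iio 0) = 0) {t : ℝ} (ht : 0 ≤ t)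
    (h : ∫⁻ x, (∫⁻ y, ENNReal.ofReal (g y) ∂(Q t x)) ∂μ < ⊤) :
    ∫⁻ x, (∫⁻ y, ENNReal.ofReal (f y) ∂(Q t x)) ∂μ < ⊤ := by
  refine lt_of_le_of_lt ?_ (ENNReal.mul_lt_top (ENNReal.ofReal_lt_top (r := C)) h)
  rw [← lintegral_const_mul' _ _ ENNReal.ofReal_ne_top]
  refine lintegral_mono_ae ?_
  filter_upwards [ae_nonneg_of_Iio hμ0] with x hx
  exact lint_cmp hC hfg (ae_nonneg_of_Iio (hQ t x ht hx).2.1)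

lemma convex_incr {f : ℝ → ℝ} {c x1 x2 : ℝ} (hf : ConvexOn ℝ (Ici c) f) (h1 : c ≤ x1) (h2 : x1 < x2)
    {x y : ℝ} (hx : x2 ≤ x) (hxy : x ≤ y) : (f x2 - f x1) / (x2 - x1) * (y - x) ≤ f y - f x := by
  rcases hxy.eq_or_lt with rfl | hxy
  · simp
  have key : (f x2 - f x1) / (x2 - x1) ≤ (f y - f x) / (y - x) := by
    have m1 : x1 ∈ Ici c := h1
    have m2 : x2 ∈ Ici c := h1.trans h2.le
    have m3 : x ∈ Ici c := h1.trans (h2.le.trans hx)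
    have m4 : y ∈ Ici c := h1.trans (h2.le.trans (hx.trans hxy.le))
    rcases hx.eq_or_lt with rfl | hx
    · exact hf.slope_mono_adjacent m1 m4 h2 hxy
    · exact (hf.slope_mono_adjacent m1 m3 h2 hx).trans (hf.slope_mono_adjacent m2 m4 hx hxy)
  rwa [le_div_iff₀ (by linarith)] at key

lemma exists_reg {f : ℝ → ℝ} (hcont : ContinuousOn f (Ici 0)) (hpos : ∀ x, 0 ≤ x → 0 < f x)
    {c K : ℝ} (hc : 0 ≤ c) (hK : 0 < K) (hconv : ConvexOn ℝ (Ici c) f)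
    (hmul : ∀ x y, c ≤ x → c ≤ y → f (x * y) ≤ K * f x * f y)
    {x1 x2 : ℝ} (h1 : c ≤ x1) (h2 : x1 < x2) (hf12 : f x1 < f x2) :
    ∃ (g : ℝ → ℝ) (D a C : ℝ), Reg g D ∧ 0 < a ∧ (∀ x, 0 ≤ x → a * x ≤ g x) ∧ 0 ≤ C ∧
      (∀ x, 0 ≤ x → f x ≤ C * g x) ∧ (∀ x, 0 ≤ x → g x ≤ C * f x) := by
  have hs : 0 < (f x2 - f x1) / (x2 - x1) := div_pos (by linarith) (by linarith)
  have hinc := fun x y (hx : x2 ≤ x) (hxy : x ≤ y) => convex_incr hconv h1 h2 hx hxy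
  set s := (f x2 - f x1) / (x2 - x1)
  set b := max x2 1 with hb
  have hb1 : 1 ≤ b := le_max_right _ _
  have hb2 : x2 ≤ b := le_max_left _ _
  have hcb : c ≤ b := by linarith
  have hb0 : 0 ≤ b := by linarith
  have hmono : ∀ x y, b ≤ x → x ≤ y → f x ≤ f y := by
    intro x y hx hxy
    have h3 := hinc x y (hb2.trans hx) hxy
    have : 0 ≤ s * (y - x) := mul_nonneg hs.le (by linarith)
    linarith
  have hfb := hpos b hb0
  -- comparison constants on the compact part
  obtain ⟨xM, hxM, hM⟩ := isCompact_Icc.exists_isMaxOn (nonempty_Icc.2 hb0)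
    (hcont.mono (Icc_subset_Ici_self : Icc 0 b ⊆ Ici 0))
  obtain ⟨xm, hxm, hm⟩ := isCompact_Icc.exists_isMinOn (nonempty_Icc.2 hb0)
    (hcont.mono (Icc_subset_Ici_self : Icc 0 b ⊆ Ici 0))
  have hfm := hpos xm hxm.1
  have hfM := hpos xM hxM.1
  set C := max 1 (max (f xM / f b) (f b / f xm)) with hC
  have hC1 : 1 ≤ C := le_max_left _ _
  have hC2 : f xM / f b ≤ C := (le_max_left _ _).trans (le_max_right _ _)
  have hC3 : f b / f xm ≤ C := (le_max_right _ _).trans (le_max_right _ _)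
  rw [div_le_iff₀ hfb] at hC2
  rw [div_le_iff₀ hfm] at hC3
  refine ⟨fun x => f (max x b), max 1 (K * f (max 2 b)), min s (f b / b), C, ?_, ?_, ?_,
    by linarith, ?_, ?_⟩
  · refine ⟨?_, ?_, ?_, le_max_left _ _, ?_⟩
    · intro x y hxy
      exact hmono _ _ (le_max_right _ _) (max_le_max_right b hxy)
    · exact hcont.comp_continuous (by fun_prop) fun x => hb0.trans (le_max_right _ _)
    · intro x
      exact hpos _ (hb0.trans (le_max_right _ _))
    · intro x hx
      set u := max x b with hu
      have hub : b ≤ u := le_max_right _ _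
      have hux : x ≤ u := le_max_left _ _
      have h2b : 2 ≤ max 2 b := le_max_left _ _
      have h3 : max (2 * x) b ≤ max 2 b * u := max_le (by nlinarith) (by nlinarith)
      have h4 := hmono _ _ (le_max_right _ _) h3
      have h5 := hmul (max 2 b) u (hcb.trans (le_max_right _ _)) (hcb.trans hub)
      have hfu := hpos u (hb0.trans hub)
      exact h4.trans (h5.trans (mul_le_mul_of_nonneg_right (le_max_right _ _) hfu.le))
  · exact lt_min hs (by positivity)
  · intro x hx
    have ha : min s (f b / b) ≤ s := min_le_left _ _
    have ha2 : min s (f b / b) ≤ f b / b := min_le_right _ _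
    have ha0 : 0 ≤ min s (f b / b) := le_min hs.le (by positivity)
    set a := min s (f b / b)
    have hab : a * b ≤ f b := by
      rwa [le_div_iff₀ (by linarith)] at ha2
    rcases le_total x b with h | h
    · simp only [max_eq_right h]; nlinarith
    · simp only [max_eq_left h]
      have := hinc b x hb2 h
      nlinarith
  · intro x hx
    rcases le_total x b with h | h
    · simp only [max_eq_right h]
      exact (hM ⟨hx, h⟩ : f x ≤ f xM).trans hC2
    · simp only [max_eq_left h]
      exact le_mul_of_one_le_left (hpos x hx).le hC1
  · intro x hx
    rcases le_total x b with h | h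
    · simp only [max_eq_right h]
      exact hC3.trans (mul_le_mul_of_nonneg_left (hm ⟨hx, h⟩ : f xm ≤ f x) (by linarith))
    · simp only [max_eq_left h]
      exact le_mul_of_one_le_left (hpos x hx).le hC1

end reduction

/-- Theorem 2.1: for a CB-process with branching mechanism `φ` (Lévy measure
`m`) satisfying Grey's condition and initial law `μ` with `μ((0,∞)) > 0`,
for every `t > 0` the `f`-moment at time `t` is finite iff the `f`-moment of
`μ` is finite and `∫_{(1,∞)} f(z) m(dz) < ∞`. -/
theorem cb_f_moment_criterion
    (f : ℝ → ℝ) (hf : ConditionA f)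
    (φ : ℝ → ℝ) (β σ : ℝ) (m : Measure ℝ)
    (hφ : IsBranchingMechanism φ β σ m) (hGrey : GreyCondition φ)
    (v : ℝ → ℝ → ℝ) (hv : IsCumulant φ v)
    (Q : ℝ → ℝ → Measure ℝ) (hQ : IsCBSemigroup v Q)
    (μ : Measure ℝ) (hμ : IsProbabilityMeasure μ)
    (hμ0 : μ (Set.Iio 0) = 0) (hμpos : 0 < μ (Set.Ioi 0))
    (t : ℝ) (ht : 0 < t) :
    (∫⁻ x, (∫⁻ y, ENNReal.ofReal (f y) ∂(Q t x)) ∂μ) < ⊤ ↔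
      ((∫⁻ x, ENNReal.ofReal (f x) ∂μ) < ⊤ ∧
        (∫⁻ z in Set.Ioi 1, ENNReal.ofReal (f z) ∂m) < ⊤) := by
  obtain ⟨hcont, hpos, c, hc, K, hK, hconv, hmul, M, hM⟩ := hf
  have hμae := ae_nonneg_of_Iio hμ0
  by_cases hanti : AntitoneOn f (Ici c)
  · -- bounded case
    have hB : ∀ x, 0 ≤ x → f x ≤ max 0 (max M (f c)) * (fun _ : ℝ => (1:ℝ)) x := by
      intro x hx
      simp only [mul_one]
      refine le_trans ?_ (le_max_right _ _)
      rcases lt_or_ge x c with h | h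
      · exact (hM x hx h).trans (le_max_left _ _)
      · exact (hanti self_mem_Ici h h).trans (le_max_right _ _)
    have hB0 : 0 ≤ max 0 (max M (f c)) := le_max_left _ _
    refine iff_of_true ?_ ⟨?_, ?_⟩
    · refine lint_cmp_fin2 hB0 hB hQ hμ0 ht.le ?_
      have : ∫⁻ x, (∫⁻ _, ENNReal.ofReal 1 ∂(Q t x)) ∂μ ≤ ∫⁻ _, 1 ∂μ := by
        refine lintegral_mono_ae ?_
        filter_upwards [hμae] with x hx
        have := (hQ t x ht.le hx).1
        simp
      refine this.trans_lt ?_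
      simp
    · refine lint_cmp_fin hB0 hB hμae ?_
      simp
    · refine lint_cmp_fin hB0 hB (ae_Ioi_one m) ?_
      simpa using hφ.meas_Ioi
  · obtain ⟨x1, x2, h1, h2, hf12⟩ : ∃ x1 x2, c ≤ x1 ∧ x1 < x2 ∧ f x1 < f x2 := by
      by_contra hcon
      push Not at hcon
      refine hanti fun x hx y hy hxy => ?_
      rcases hxy.eq_or_lt with rfl | h
      · exact le_rfl
      · exact hcon x y hx h
    obtain ⟨g, D, a, C, hreg, ha, hag, hC, hfg, hgf⟩ :=
      exists_reg hcont hpos hc hK hconv hmul h1 h2 hf12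
    have hmain := reg_main hreg ha hag hφ hv hQ hμ0 hμpos ht
    constructor
    · intro H
      obtain ⟨H1, H2⟩ := hmain.1 (lint_cmp_fin2 hC hgf hQ hμ0 ht.le H)
      exact ⟨lint_cmp_fin hC hfg hμae H1, lint_cmp_fin hC hfg (ae_Ioi_one m) H2⟩
    · rintro ⟨H1, H2⟩
      exact lint_cmp_fin2 hC hfg hQ hμ0 ht.le
        (hmain.2 ⟨lint_cmp_fin hC hgf hμae H1, lint_cmp_fin hC hgf (ae_Ioi_one m) H2⟩)
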